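/- arXiv:2012.09416 — 8 statements merged into one kernel-verified Lean document; each statement's English description precedes it below -/
import Mathlib

section
/- Suppose A : [0,T) → M_n(ℂ) is differentiable and satisfies A'(t) = A(t)·[A(t), A(t)*] for all t ∈ [0,T). Then for every integer m ≥ 1 and every t ∈ [0,T), tr(A(t)^m) = tr(A(0)^m); consequently the characteristic polynomial of A(t), and hence the spectrum of A(t), is equal to that of A(0) for all t. -/
/-!
STATEMENT 5: If A : [0,T) → M_n(ℂ) is differentiable with A' = A[A,A*], then
tr(A(t)^m) = tr(A(0)^m) for all m ≥ 1 and all t, hence the characteristic polynomial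
(and the spectrum) of A(t) is constant in t.
-/

open Matrix Set

attribute [local instance] Matrix.frobeniusSeminormedAddCommGroup
  Matrix.frobeniusNormedAddCommGroup Matrix.frobeniusNormedSpace

/-!
Setting `B = A A*`, the equation `A' = A [A, A*]` takes the Lax form `A' = [A, B]`. Solutions of
a Lax equation with a given `B` are closed under products, hence so is each power `A ^ m`, and
`x - A` solves it for every scalar `x`. Along any solution `M` both the trace and the determinant
are constant: `tr M' = tr [M, B] = 0`, and Jacobi's formula, which comes from expanding the
determinant as a multilinear function of the rows, gives
`(det M)' = tr (adj M * [M, B]) = det M * tr B - det M * tr B = 0`.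
Hence `tr (A ^ m)` and `det (x - A)` are constant.
-/

theorem eq_of_hasDerivWithinAt_zero_of_convex {𝕜 E : Type*} [RCLike 𝕜] [NormedAddCommGroup E]
    [NormedSpace 𝕜 E] {f : 𝕜 → E} {s : Set 𝕜} (hs : Convex ℝ s)
    (hf : ∀ t ∈ s, HasDerivWithinAt f 0 s t) {a b : 𝕜} (ha : a ∈ s) (hb : b ∈ s) : f a = f b := by
  have h := hs.norm_image_sub_le_of_norm_hasDerivWithin_le (C := 0) hf (by simp) hb ha
  simpa [sub_eq_zero] using h

theorem sum_det_updateRow_eq_trace_adjugate_mul {ι R : Type*} [Fintype ι] [DecidableEq ι]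
    [CommRing R] (M N : Matrix ι ι R) :
    ∑ i, (M.updateRow i (N.row i)).det = (M.adjugate * N).trace := by
  have hrow (i : ι) : (M.updateRow i (N.row i)).det = (N * M.adjugate) i i := by
    rw [← cramer_transpose_apply, cramer_eq_adjugate_mulVec, ← adjugate_transpose, mulVec_transpose]
    rfl
  rw [trace_mul_comm]
  exact Finset.sum_congr rfl fun i _ => hrow i

section MatrixDerivative

variable {𝕜 ι R : Type*} [NontriviallyNormedField 𝕜] {s : Set 𝕜} {t : 𝕜}

theorem hasDerivWithinAt_matrix_iff {κ : Type*} [Finite ι] [Finite κ] [NormedAddCommGroup R]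
    [NormedSpace 𝕜 R] {M : 𝕜 → Matrix ι κ R} {M' : Matrix ι κ R} :
    HasDerivWithinAt M M' s t ↔ ∀ i j, HasDerivWithinAt (fun u => M u i j) (M' i j) s t := by
  have := Fintype.ofFinite ι
  have := Fintype.ofFinite κ
  exact hasDerivWithinAt_pi.trans (forall_congr' fun _ => hasDerivWithinAt_pi)

theorem hasDerivWithinAt_matrix_mul {κ l : Type*} [Finite ι] [Fintype κ] [Finite l]
    [NormedRing R] [NormedAlgebra 𝕜 R] {M : 𝕜 → Matrix ι κ R} {N : 𝕜 → Matrix κ l R}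
    {M' : Matrix ι κ R} {N' : Matrix κ l R} (hM : HasDerivWithinAt M M' s t)
    (hN : HasDerivWithinAt N N' s t) :
    HasDerivWithinAt (fun u => M u * N u) (M' * N t + M t * N') s t := by
  rw [hasDerivWithinAt_matrix_iff] at hM hN ⊢
  intro i j
  simp only [Matrix.add_apply, mul_apply, ← Finset.sum_add_distrib]
  exact HasDerivWithinAt.fun_sum fun k _ => (hM i k).fun_mul (hN k j)

variable [Fintype ι]

theorem hasDerivWithinAt_matrix_trace [NormedAddCommGroup R] [NormedSpace 𝕜 R]
    {M : 𝕜 → Matrix ι ι R} {M' : Matrix ι ι R} (hM : HasDerivWithinAt M M' s t) :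
    HasDerivWithinAt (fun u => (M u).trace) M'.trace s t :=
  HasDerivWithinAt.fun_sum fun i _ => hasDerivWithinAt_matrix_iff.1 hM i i

theorem hasDerivWithinAt_matrix_det [DecidableEq ι] [NormedCommRing R] [NormedAlgebra 𝕜 R]
    {M : 𝕜 → Matrix ι ι R} {M' : Matrix ι ι R} (hM : HasDerivWithinAt M M' s t) :
    HasDerivWithinAt (fun u => (M u).det) ((M t).adjugate * M').trace s t := by
  let D : ContinuousMultilinearMap 𝕜 (fun _ : ι => ι → R) R :=
    ⟨(detRowAlternating (n := ι) (R := R)).toMultilinearMap.restrictScalars 𝕜,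
      Continuous.matrix_det continuous_id⟩
  have hD : D.linearDeriv (M t) M' = ((M t).adjugate * M').trace :=
    (D.linearDeriv_apply _ _).trans (sum_det_updateRow_eq_trace_adjugate_mul _ _)
  exact ((D.hasFDerivAt (M t)).comp_hasDerivWithinAt t hM).congr_deriv hD

end MatrixDerivative

section LaxPair

variable {𝕜 R : Type*} [NontriviallyNormedField 𝕜] [Ring R] [Module 𝕜 R] [TopologicalSpace R]
  [ContinuousSMul 𝕜 R]

/-- `A` and `B` form a Lax pair on `s`: there `A` satisfies the Lax equation `A' = [A, B]`, which
makes the flow of a matrix `A` isospectral. The derivative is taken within `s`, so that it is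
one-sided at the endpoints of an interval. -/
def IsLaxPairOn (A B : 𝕜 → R) (s : Set 𝕜) : Prop :=
  ∀ t ∈ s, HasDerivWithinAt A (A t * B t - B t * A t) s t

theorem isLaxPairOn_mul_of_hasDerivWithinAt {A B : 𝕜 → R} {s : Set 𝕜}
    (hA : ∀ t ∈ s, HasDerivWithinAt A (A t * (A t * B t - B t * A t)) s t) :
    IsLaxPairOn A (fun t => A t * B t) s := fun t ht => by
  simpa only [mul_sub, mul_assoc] using hA t ht

end LaxPair

namespace IsLaxPairOn

section Invariants

variable {𝕜 ι R : Type*} [NontriviallyNormedField 𝕜] [Fintype ι] [DecidableEq ι]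
  {s : Set 𝕜}

section Ring

variable [NormedRing R] [NormedAlgebra 𝕜 R] {A B C : 𝕜 → Matrix ι ι R}

theorem mul (hA : IsLaxPairOn A B s) (hC : IsLaxPairOn C B s) :
    IsLaxPairOn (fun t => A t * C t) B s := fun t ht =>
  (hasDerivWithinAt_matrix_mul (hA t ht) (hC t ht)).congr_deriv (by noncomm_ring)

theorem pow (hA : IsLaxPairOn A B s) (m : ℕ) : IsLaxPairOn (fun t => A t ^ m) B s := by
  induction m with
  | zero =>
    simp only [pow_zero]
    exact fun t _ => (hasDerivWithinAt_const t s (1 : Matrix ι ι R)).congr_deriv (by simp)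
  | succ m ih => simpa only [pow_succ] using ih.mul hA

end Ring

variable [NormedCommRing R] [NormedAlgebra 𝕜 R] {A B : 𝕜 → Matrix ι ι R}

theorem scalar_sub (hA : IsLaxPairOn A B s) (x : R) :
    IsLaxPairOn (fun t => scalar ι x - A t) B s := fun t ht =>
  ((hA t ht).const_sub (scalar ι x)).congr_deriv <| by
    have hcomm : scalar ι x * B t = B t * scalar ι x := scalar_commute x (Commute.all x) (B t)
    rw [sub_mul, mul_sub, hcomm]
    abel

theorem hasDerivWithinAt_trace (hA : IsLaxPairOn A B s) {t : 𝕜} (ht : t ∈ s) :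
    HasDerivWithinAt (fun u => (A u).trace) 0 s t :=
  (hasDerivWithinAt_matrix_trace (hA t ht)).congr_deriv <| by
    rw [trace_sub, trace_mul_comm, sub_self]

theorem hasDerivWithinAt_det (hA : IsLaxPairOn A B s) {t : 𝕜} (ht : t ∈ s) :
    HasDerivWithinAt (fun u => (A u).det) 0 s t :=
  (hasDerivWithinAt_matrix_det (hA t ht)).congr_deriv <| calc
    ((A t).adjugate * (A t * B t - B t * A t)).trace
      = ((A t).adjugate * A t * B t).trace - (A t * (A t).adjugate * B t).trace := by
        rw [mul_sub, trace_sub, ← mul_assoc, ← mul_assoc, trace_mul_comm _ (A t), ← mul_assoc]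
    _ = 0 := by rw [adjugate_mul, mul_adjugate, sub_self]

end Invariants

variable {𝕜 ι R : Type*} [RCLike 𝕜] [Fintype ι] [DecidableEq ι] [NormedCommRing R]
  [NormedAlgebra 𝕜 R] {A B : 𝕜 → Matrix ι ι R} {s : Set 𝕜} {a b : 𝕜}

theorem trace_eq (hA : IsLaxPairOn A B s) (hs : Convex ℝ s) (ha : a ∈ s) (hb : b ∈ s) :
    (A a).trace = (A b).trace :=
  eq_of_hasDerivWithinAt_zero_of_convex hs (fun _ => hA.hasDerivWithinAt_trace) ha hb

theorem det_eq (hA : IsLaxPairOn A B s) (hs : Convex ℝ s) (ha : a ∈ s) (hb : b ∈ s) :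
    (A a).det = (A b).det :=
  eq_of_hasDerivWithinAt_zero_of_convex hs (fun _ => hA.hasDerivWithinAt_det) ha hb

theorem charpoly_eq [IsDomain R] (hA : IsLaxPairOn A B s) (hs : Convex ℝ s) (ha : a ∈ s)
    (hb : b ∈ s) : (A a).charpoly = (A b).charpoly := by
  have : Infinite R := .of_injective _ (algebraMap 𝕜 R).injective
  refine Polynomial.funext fun x => ?_
  simpa only [eval_charpoly] using (hA.scalar_sub x).det_eq hs ha hb

end IsLaxPairOn

theorem spectrum_eq_of_charpoly_eq {ι R : Type*} [Fintype ι] [DecidableEq ι] [CommRing R]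
    {M N : Matrix ι ι R} (h : M.charpoly = N.charpoly) : spectrum R M = spectrum R N := by
  ext x
  rw [mem_spectrum_iff_not_isUnit_eval_charpoly, mem_spectrum_iff_not_isUnit_eval_charpoly, h]

theorem convex_setOf_nonneg_and_coe_lt (T : EReal) :
    Convex ℝ {s : ℝ | 0 ≤ s ∧ (s : EReal) < T} :=
  (ordConnected_Ici.inter
    (ordConnected_Iio.preimage_mono EReal.coe_strictMono.monotone)).convex

theorem stmt5_general {𝕜 ι R : Type*} [RCLike 𝕜] [Fintype ι] [DecidableEq ι] [NormedCommRing R]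
    [NormedAlgebra 𝕜 R] [IsDomain R] {s : Set 𝕜} (hs : Convex ℝ s) {A B : 𝕜 → Matrix ι ι R}
    (hA : IsLaxPairOn A B s) {a b : 𝕜} (ha : a ∈ s) (hb : b ∈ s) :
    (∀ m : ℕ, (A a ^ m).trace = (A b ^ m).trace) ∧
      (A a).charpoly = (A b).charpoly ∧ spectrum R (A a) = spectrum R (A b) :=
  have hchar := hA.charpoly_eq hs ha hb
  ⟨fun m => (hA.pow m).trace_eq hs ha hb, hchar, spectrum_eq_of_charpoly_eq hchar⟩

theorem stmt5 {n : ℕ} {T : EReal} (hT : 0 < T)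
    {A : ℝ → Matrix (Fin n) (Fin n) ℂ}
    (hA : ∀ t ∈ {s : ℝ | 0 ≤ s ∧ (s : EReal) < T},
      HasDerivWithinAt A (A t * (A t * (A t)ᴴ - (A t)ᴴ * A t))
        {s : ℝ | 0 ≤ s ∧ (s : EReal) < T} t) :
    ∀ t ∈ {s : ℝ | 0 ≤ s ∧ (s : EReal) < T},
      (∀ m : ℕ, 1 ≤ m → (A t ^ m).trace = (A 0 ^ m).trace) ∧
      (A t).charpoly = (A 0).charpoly ∧
      spectrum ℂ (A t) = spectrum ℂ (A 0) := fun _ ht =>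
  (stmt5_general (convex_setOf_nonneg_and_coe_lt T) (isLaxPairOn_mul_of_hasDerivWithinAt hA) ht
    ⟨le_rfl, hT⟩).imp_left fun htrace m _ => htrace m
end

section
/- For every A ∈ M_n(ℂ), the real part of tr(A·[A,A*]·A*) is nonpositive — equivalently ‖A²‖ ≤ ‖AA*‖ in the Frobenius norm — with equality if and only if A is normal. -/
/-!
STATEMENT 6: For every A ∈ M_n(ℂ), Re tr(A·[A,A*]·A*) ≤ 0, with equality iff A is normal.
-/

open Matrix

/-!
For all square `A` and `B`, the commutator `⁅A, B⁆` is trace-orthogonal to the anticommutator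
`A * B + B * A`, because their product differs by a commutator from `(A * B) ^ 2 - (B * A) ^ 2`,
whose trace vanishes by cyclicity. Since `⁅A, B⁆ = (A * B + B * A) - 2 * B * A`, this gives
`tr (⁅A, B⁆ ^ 2) = -2 * tr (A * ⁅A, B⁆ * B)`. For `B = Aᴴ` the commutator is Hermitian, so the
left-hand side is its squared Frobenius norm.
-/

section TraceIdentity

variable {m R : Type*} [Fintype m] [CommRing R]

theorem trace_commutator_mul_anticommutator (A B : Matrix m m R) :
    (⁅A, B⁆ * (A * B + B * A)).trace = 0 := by
  have expand : ⁅A, B⁆ * (A * B + B * A) =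
      (A * B * (A * B) - B * A * (B * A)) + (A * B * (B * A) - B * A * (A * B)) := by
    rw [Ring.lie_def]
    noncomm_ring
  have trace_squares : (A * B * (A * B)).trace = (B * A * (B * A)).trace := by
    rw [Matrix.mul_assoc, trace_mul_comm]
    simp only [Matrix.mul_assoc]
  rw [expand, trace_add, trace_sub, trace_sub, trace_squares, trace_mul_comm (A * B) (B * A),
    sub_self, sub_self, add_zero]

theorem trace_commutator_mul_self (A B : Matrix m m R) :
    (⁅A, B⁆ * ⁅A, B⁆).trace = -2 * (A * ⁅A, B⁆ * B).trace := by
  have commutator_eq : ⁅A, B⁆ = (A * B + B * A) - (B * A + B * A) := by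
    rw [Ring.lie_def]
    abel
  calc (⁅A, B⁆ * ⁅A, B⁆).trace
      = (⁅A, B⁆ * (A * B + B * A)).trace
          - ((⁅A, B⁆ * (B * A)).trace + (⁅A, B⁆ * (B * A)).trace) := by
        rw [← trace_add, ← trace_sub, ← Matrix.mul_add, ← Matrix.mul_sub, ← commutator_eq]
    _ = -2 * (⁅A, B⁆ * B * A).trace := by
        rw [trace_commutator_mul_anticommutator, Matrix.mul_assoc]
        ring
    _ = -2 * (A * ⁅A, B⁆ * B).trace := by rw [trace_mul_cycle]

end TraceIdentity

theorem isHermitian_commutator_conjTranspose {m R : Type*} [Fintype m] [NonUnitalRing R]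
    [StarRing R] (A : Matrix m m R) :
    (⁅A, Aᴴ⁆).IsHermitian :=
  (isHermitian_mul_conjTranspose_self A).sub (isHermitian_conjTranspose_mul_self A)

section FrobeniusNorm

open scoped Matrix.Norms.Frobenius

variable {m n 𝕜 : Type*} [Fintype m] [Fintype n] [RCLike 𝕜]

theorem frobenius_norm_sq_eq_trace_mul_conjTranspose (C : Matrix m n 𝕜) :
    ((‖C‖ ^ 2 : ℝ) : 𝕜) = (C * Cᴴ).trace := by
  have norm_sq : ‖C‖ ^ 2 = ∑ i, ∑ j, ‖C i j‖ ^ 2 := by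
    rw [frobenius_norm_def, ← Real.sqrt_eq_rpow, Real.sq_sqrt (by positivity)]
    simp only [Real.rpow_two]
  simp only [norm_sq, trace, diag_apply, mul_apply, conjTranspose_apply, RCLike.star_def,
    RCLike.mul_conj, map_sum, map_pow]

theorem frobenius_norm_sq_commutator_conjTranspose (A : Matrix m m 𝕜) :
    ‖⁅A, Aᴴ⁆‖ ^ 2 = -2 * RCLike.re (A * ⁅A, Aᴴ⁆ * Aᴴ).trace := by
  have trace_eq : ((‖⁅A, Aᴴ⁆‖ ^ 2 : ℝ) : 𝕜) = ((-2 : ℝ) : 𝕜) * (A * ⁅A, Aᴴ⁆ * Aᴴ).trace := by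
    rw [frobenius_norm_sq_eq_trace_mul_conjTranspose, (isHermitian_commutator_conjTranspose A).eq,
      trace_commutator_mul_self, RCLike.ofReal_neg, RCLike.ofReal_ofNat]
  rw [← RCLike.re_ofReal_mul, ← trace_eq, RCLike.ofReal_re]

theorem stmt6_general (A : Matrix m m 𝕜) :
    RCLike.re (A * (A * Aᴴ - Aᴴ * A) * Aᴴ).trace ≤ 0 ∧
      (RCLike.re (A * (A * Aᴴ - Aᴴ * A) * Aᴴ).trace = 0 ↔ A * Aᴴ = Aᴴ * A) := by
  have norm_sq := frobenius_norm_sq_commutator_conjTranspose A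
  rw [← Ring.lie_def]
  refine ⟨by linarith [sq_nonneg ‖⁅A, Aᴴ⁆‖], ?_⟩
  calc RCLike.re (A * ⁅A, Aᴴ⁆ * Aᴴ).trace = 0
      ↔ ‖⁅A, Aᴴ⁆‖ ^ 2 = 0 := by constructor <;> intro h <;> linarith
    _ ↔ ⁅A, Aᴴ⁆ = 0 := by rw [sq_eq_zero_iff, norm_eq_zero]
    _ ↔ A * Aᴴ = Aᴴ * A := by rw [Ring.lie_def, sub_eq_zero]

end FrobeniusNorm

theorem stmt6 {n : ℕ} (A : Matrix (Fin n) (Fin n) ℂ) :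
    ((A * (A * Aᴴ - Aᴴ * A) * Aᴴ).trace).re ≤ 0 ∧
      (((A * (A * Aᴴ - Aᴴ * A) * Aᴴ).trace).re = 0 ↔ A * Aᴴ = Aᴴ * A) :=
  stmt6_general A
end

section
/- Suppose A : [0,T) → M_n(ℂ) is differentiable and satisfies A'(t) = A(t)·[A(t), A(t)*] for all t ∈ [0,T). Then the function t ↦ ‖A(t)‖² (the squared Frobenius norm, tr(A(t)A(t)*)) is monotonically non-increasing, and its derivative at a time t vanishes if and only if A(t) is normal. -/
/-!
STATEMENT 7: If A : [0,∞) → M_n(ℂ) solves A' = A[A,A*], then t ↦ ‖A t‖² = tr(A(t)A(t)*)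
is monotonically non-increasing, and its derivative at a time t vanishes iff A(t) is normal.
-/

open Matrix Set

attribute [local instance] Matrix.frobeniusSeminormedAddCommGroup
  Matrix.frobeniusNormedAddCommGroup Matrix.frobeniusNormedSpace

/-!
Along a solution, `d/dt ‖A‖² = 2 Re tr (A' A*) = 2 Re tr (A [A, A*] A*)`. Put `P = A A*`,
`Q = A* A` and `C = [A, A*] = P - Q`. Cyclicity of the trace gives `tr P² = tr Q²`, that is,
`tr ((P + Q) C) = 0`, so `2 tr (A C A*) = 2 tr (Q C) = -tr C²`. As `C` is Hermitian, the derivative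
is `-‖C‖²`: it is never positive, and it vanishes exactly when `C = 0`.
-/

section Derivative

variable {𝕜 E R l m n : Type*} [NontriviallyNormedField 𝕜] [NormedAddCommGroup E]
  [NormedSpace 𝕜 E] [NormedRing R] [NormedAlgebra 𝕜 R] {s : Set 𝕜} {t : 𝕜}

/- The derivative depends on the norm only through its topology, and the topology of the Frobenius
norm is definitionally the product topology. -/
theorem hasDerivWithinAt_matrix [Finite n] {A : 𝕜 → Matrix m n E} {A' : Matrix m n E} :
    HasDerivWithinAt A A' s t ↔ ∀ i j, HasDerivWithinAt (fun u => A u i j) (A' i j) s t := by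
  cases nonempty_fintype n
  exact hasDerivWithinAt_pi.trans (forall_congr' fun _ => hasDerivWithinAt_pi)

theorem hasDerivWithinAt_matrix_mul_s7 [Fintype m] [Finite n] {A : 𝕜 → Matrix l m R}
    {A' : Matrix l m R} {B : 𝕜 → Matrix m n R} {B' : Matrix m n R}
    (hA : HasDerivWithinAt A A' s t) (hB : HasDerivWithinAt B B' s t) :
    HasDerivWithinAt (fun u => A u * B u) (A' * B t + A t * B') s t := by
  refine hasDerivWithinAt_matrix.2 fun i j => ?_
  simp only [Matrix.add_apply, Matrix.mul_apply, ← Finset.sum_add_distrib]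
  exact .fun_sum fun k _ =>
    (hasDerivWithinAt_matrix.1 hA i k).mul (hasDerivWithinAt_matrix.1 hB k j)

theorem hasDerivWithinAt_matrix_conjTranspose [Finite m] [Finite n] [StarRing 𝕜] [TrivialStar 𝕜]
    [StarAddMonoid E] [ContinuousStar E] [StarModule 𝕜 E] {A : 𝕜 → Matrix m n E}
    {A' : Matrix m n E} (hA : HasDerivWithinAt A A' s t) :
    HasDerivWithinAt (fun u => (A u)ᴴ) A'ᴴ s t :=
  hasDerivWithinAt_matrix.2 fun i j => (hasDerivWithinAt_matrix.1 hA j i).star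

theorem hasDerivWithinAt_matrix_trace_s7 [Fintype n] {A : 𝕜 → Matrix n n E} {A' : Matrix n n E}
    (hA : HasDerivWithinAt A A' s t) :
    HasDerivWithinAt (fun u => (A u).trace) A'.trace s t :=
  .fun_sum fun i _ => hasDerivWithinAt_matrix.1 hA i i

end Derivative

theorem two_mul_trace_mul_lie_mul {n R : Type*} [Fintype n] [CommRing R] (A B : Matrix n n R) :
    2 * (A * ⁅A, B⁆ * B).trace = -(⁅A, B⁆ * ⁅A, B⁆).trace := by
  have cyclic : (A * ⁅A, B⁆ * B).trace = (B * A * ⁅A, B⁆).trace := by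
    rw [Matrix.trace_mul_comm, Matrix.mul_assoc]
  have trace_sq : (A * B * (A * B)).trace = (B * A * (B * A)).trace := by
    rw [Matrix.mul_assoc, Matrix.trace_mul_comm]
    simp only [Matrix.mul_assoc]
  have cross : (B * A * (A * B)).trace = (A * B * (B * A)).trace := Matrix.trace_mul_comm _ _
  rw [cyclic]
  simp only [Ring.lie_def, Matrix.mul_sub, Matrix.sub_mul, Matrix.trace_sub, trace_sq, cross]
  ring

theorem isHermitian_lie_conjTranspose {n R : Type*} [Fintype n] [NonUnitalRing R] [StarRing R]
    (A : Matrix n n R) : ⁅A, Aᴴ⁆.IsHermitian :=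
  (isHermitian_mul_conjTranspose_self A).sub (isHermitian_conjTranspose_mul_self A)

section Frobenius

variable {𝕜 m n : Type*} [RCLike 𝕜] [Fintype m] [Fintype n]

theorem re_trace_mul_conjTranspose_self (A : Matrix m n 𝕜) :
    RCLike.re (A * Aᴴ).trace = ‖A‖ ^ 2 := by
  rw [frobenius_norm_def, ← Real.sqrt_eq_rpow, Real.sq_sqrt (by positivity)]
  simp only [Matrix.trace, Matrix.diag_apply, Matrix.mul_apply, conjTranspose_apply,
    RCLike.star_def, RCLike.mul_conj, map_sum, ← RCLike.ofReal_pow, RCLike.ofReal_re, Real.rpow_two]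

theorem re_trace_mul_conjTranspose_comm (A B : Matrix m n 𝕜) :
    RCLike.re (A * Bᴴ).trace = RCLike.re (B * Aᴴ).trace := by
  rw [← RCLike.conj_re, starRingEnd_apply, ← trace_conjTranspose, conjTranspose_mul,
    conjTranspose_conjTranspose]

theorem hasDerivWithinAt_re_trace_mul_conjTranspose_self {A : ℝ → Matrix m n 𝕜}
    {A' : Matrix m n 𝕜} {s : Set ℝ} {t : ℝ} (hA : HasDerivWithinAt A A' s t) :
    HasDerivWithinAt (fun u => RCLike.re (A u * (A u)ᴴ).trace)
      (2 * RCLike.re (A' * (A t)ᴴ).trace) s t := by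
  have htrace : HasDerivWithinAt (fun u => (A u * (A u)ᴴ).trace)
      (A' * (A t)ᴴ + A t * A'ᴴ).trace s t :=
    hasDerivWithinAt_matrix_trace_s7
      (hasDerivWithinAt_matrix_mul_s7 hA (hasDerivWithinAt_matrix_conjTranspose hA))
  refine (RCLike.reCLM.hasFDerivAt.comp_hasDerivWithinAt t htrace).congr_deriv ?_
  rw [RCLike.reCLM_apply, trace_add, map_add, re_trace_mul_conjTranspose_comm (A t), two_mul]

theorem two_mul_re_trace_mul_lie_conjTranspose_mul (A : Matrix n n 𝕜) :
    2 * RCLike.re (A * ⁅A, Aᴴ⁆ * Aᴴ).trace = -‖⁅A, Aᴴ⁆‖ ^ 2 := by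
  have h := congrArg RCLike.re (two_mul_trace_mul_lie_mul A Aᴴ)
  rw [← re_trace_mul_conjTranspose_self, (isHermitian_lie_conjTranspose A).eq]
  simpa using h

end Frobenius

theorem stmt7_general {𝕜 ι : Type*} [RCLike 𝕜] [Fintype ι] {A : ℝ → Matrix ι ι 𝕜} {s : Set ℝ}
    (hconvex : Convex ℝ s) (hunique : UniqueDiffOn ℝ s)
    (hA : ∀ t ∈ s, HasDerivWithinAt A (A t * (A t * (A t)ᴴ - (A t)ᴴ * A t)) s t) :
    AntitoneOn (fun t => RCLike.re (A t * (A t)ᴴ).trace) s ∧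
      ∀ t ∈ s, ∀ d : ℝ,
        HasDerivWithinAt (fun u => RCLike.re (A u * (A u)ᴴ).trace) d s t →
        (d = 0 ↔ A t * (A t)ᴴ = (A t)ᴴ * A t) := by
  have hderiv : ∀ t ∈ s, HasDerivWithinAt (fun u => RCLike.re (A u * (A u)ᴴ).trace)
      (-‖⁅A t, (A t)ᴴ⁆‖ ^ 2) s t := fun t ht =>
    (hasDerivWithinAt_re_trace_mul_conjTranspose_self (hA t ht)).congr_deriv
      (two_mul_re_trace_mul_lie_conjTranspose_mul (A t))
  constructor
  · exact antitoneOn_of_hasDerivWithinAt_nonpos hconvex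
      (fun t ht => (hderiv t ht).continuousWithinAt)
      (fun t ht => (hderiv t (interior_subset ht)).mono interior_subset)
      (fun t _ => neg_nonpos.2 (sq_nonneg _))
  · intro t ht d hd
    rw [(hunique t ht).eq_deriv _ hd (hderiv t ht), neg_eq_zero, sq_eq_zero_iff, norm_eq_zero,
      Ring.lie_def, sub_eq_zero]

theorem stmt7 {n : ℕ} {A : ℝ → Matrix (Fin n) (Fin n) ℂ}
    (hA : ∀ t ∈ Ici (0 : ℝ),
      HasDerivWithinAt A (A t * (A t * (A t)ᴴ - (A t)ᴴ * A t)) (Ici 0) t) :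
    AntitoneOn (fun t => ((A t * (A t)ᴴ).trace).re) (Ici 0) ∧
      ∀ t ∈ Ici (0 : ℝ), ∀ d : ℝ,
        HasDerivWithinAt (fun s => ((A s * (A s)ᴴ).trace).re) d (Ici 0) t →
        (d = 0 ↔ A t * (A t)ᴴ = (A t)ᴴ * A t) :=
  stmt7_general (convex_Ici 0) (uniqueDiffOn_Ici 0) hA
end

section
/- Suppose A : [0,∞) → M_n(ℂ) is differentiable and satisfies A'(t) = A(t)·[A(t), A(t)*] for all t ≥ 0. Then A(t) → 0 as t → ∞ if and only if A(0) is nilpotent. -/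
/-!
STATEMENT 10: If A : [0,∞) → M_n(ℂ) solves A' = A[A,A*], then A(t) → 0 as t → ∞
iff A(0) is nilpotent.
-/

open Matrix Set Filter

attribute [local instance] Matrix.frobeniusSeminormedAddCommGroup
  Matrix.frobeniusNormedAddCommGroup Matrix.frobeniusNormedSpace

/-!
Since `A[A, A*] = [A, AA*]`, the flow is a Lax equation, so the traces `tr (A ^ k)` are conserved.
In characteristic zero a matrix is nilpotent iff all these traces with `k ≠ 0` vanish. If `A → 0`,
they vanish by continuity. Conversely, if `A 0` is nilpotent then so is every `A t`; the Frobenius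
norm satisfies `(‖A‖²)' = -‖[A, A*]‖²`, and compactness of the unit sphere of the closed cone of
nilpotent matrices, on which `[A, A*]` vanishes only at `0`, gives `‖[A, A*]‖ ≥ c‖A‖²`. Hence
`(‖A‖²)' ≤ -c²(‖A‖²)²`, which forces `‖A t‖² ≤ 1 / (c² t)`.
-/

section NilpotentTrace

open Polynomial

variable {ι K : Type*} [Fintype ι] [DecidableEq ι]

theorem trace_aeval_eq_zero_of_X_dvd [CommSemiring K] {M : Matrix ι ι K}
    (hM : ∀ k ≠ 0, (M ^ k).trace = 0) {p : K[X]} (hp : X ∣ p) : (aeval M p).trace = 0 := by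
  rw [aeval_eq_sum_range, trace_sum]
  refine Finset.sum_eq_zero fun k _ => ?_
  rw [trace_smul]
  rcases eq_or_ne k 0 with rfl | hk
  · rw [X_dvd_iff.mp hp, zero_smul]
  · rw [hM k hk, smul_zero]

omit [DecidableEq ι] in
theorem eq_zero_of_isIdempotentElem_of_trace_eq_zero [Field K] [CharZero K] {M : Matrix ι ι K}
    (hM : IsIdempotentElem M) (h : M.trace = 0) : M = 0 := by
  classical
  have hidem : IsIdempotentElem (toLin' M) := by
    rw [IsIdempotentElem, Module.End.mul_eq_comp, ← toLin'_mul, hM.eq]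
  exact toLin'.map_eq_zero_iff.mp
    (LinearMap.IsIdempotentElem.eq_zero_of_trace_eq_zero hidem (by rwa [trace_toLin'_eq]))

theorem isNilpotent_of_forall_trace_pow_eq_zero [Field K] [CharZero K] {M : Matrix ι ι K}
    (hM : ∀ k ≠ 0, (M ^ k).trace = 0) : IsNilpotent M := by
  obtain ⟨r, hr, hXr⟩ :=
    M.charpoly.exists_eq_pow_rootMultiplicity_mul_and_not_dvd M.charpoly_monic.ne_zero 0
  set m := M.charpoly.rootMultiplicity 0
  rw [map_zero, sub_zero] at hr hXr
  -- `a * X ^ (m + 1)` at `M` is the projection onto the invertible Fitting component of `M`.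
  obtain ⟨a, b, hab⟩ : IsCoprime (X ^ (m + 1)) r :=
    ((prime_X.irreducible.coprime_iff_not_dvd).mpr hXr).pow_left
  have haeval : M ^ m * aeval M r = 0 := by
    rw [← aeval_X_pow (R := K) M, ← map_mul, ← hr, aeval_self_charpoly]
  have hidem : IsIdempotentElem (aeval M (a * X ^ (m + 1))) := by
    have hmul : a * X ^ (m + 1) * (a * X ^ (m + 1)) =
        a * X ^ (m + 1) - a * b * X * (X ^ m * r) := by
      linear_combination (a * X ^ (m + 1)) * hab
    rw [IsIdempotentElem, ← map_mul, hmul, ← hr, map_sub, map_mul _ (a * b * X),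
      aeval_self_charpoly, mul_zero, sub_zero]
  have hzero : aeval M (a * X ^ (m + 1)) = 0 :=
    eq_zero_of_isIdempotentElem_of_trace_eq_zero hidem <|
      trace_aeval_eq_zero_of_X_dvd hM ((dvd_pow_self X m.succ_ne_zero).mul_left a)
  refine ⟨m, ?_⟩
  calc M ^ m = M ^ m * aeval M (a * X ^ (m + 1) + b * r) := by rw [hab, map_one, mul_one]
    _ = M ^ m * aeval M r * aeval M b := by
      rw [map_add, hzero, zero_add, mul_comm b, map_mul, mul_assoc]
    _ = 0 := by rw [haeval, zero_mul]

theorem isNilpotent_iff_forall_trace_pow_eq_zero [Field K] [CharZero K] {M : Matrix ι ι K} :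
    IsNilpotent M ↔ ∀ k ≠ 0, (M ^ k).trace = 0 :=
  ⟨fun h _ hk => (isNilpotent_trace_of_isNilpotent (h.pow_of_pos hk)).eq_zero,
    isNilpotent_of_forall_trace_pow_eq_zero⟩

theorem isClosed_setOf_isNilpotent [Field K] [CharZero K] [TopologicalSpace K]
    [IsTopologicalRing K] [T1Space K] : IsClosed {M : Matrix ι ι K | IsNilpotent M} := by
  simp only [isNilpotent_iff_forall_trace_pow_eq_zero, ofPred_forall]
  exact isClosed_iInter fun k => isClosed_iInter fun _ =>
    isClosed_singleton.preimage (continuous_pow k).matrix_trace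

end NilpotentTrace

theorem exists_pos_mul_norm_pow_le_of_homogeneous {E : Type*} [NormedAddCommGroup E]
    [NormedSpace ℝ E] [ProperSpace E] {K : Set E} (hK : IsClosed K)
    (hsmul : ∀ r : ℝ, 0 < r → ∀ x ∈ K, r • x ∈ K) {g : E → ℝ} (hg : ContinuousOn g K) {d : ℕ}
    (hhom : ∀ r : ℝ, 0 < r → ∀ x ∈ K, g (r • x) = r ^ d * g x)
    (hpos : ∀ x ∈ K, x ≠ 0 → 0 < g x) :
    ∃ c > 0, ∀ x ∈ K, x ≠ 0 → c * ‖x‖ ^ d ≤ g x := by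
  obtain ⟨c, hc, hle⟩ := ((isCompact_sphere (0 : E) 1).inter_left hK).exists_forall_le'
    (hg.mono inter_subset_left) fun x hx => hpos x hx.1 (ne_zero_of_mem_unit_sphere ⟨x, hx.2⟩)
  refine ⟨c, hc, fun x hx hx0 => ?_⟩
  have hnorm : 0 < ‖x‖ := norm_pos_iff.mpr hx0
  have hinv : 0 < ‖x‖⁻¹ := inv_pos.mpr hnorm
  have hunit : ‖x‖⁻¹ • x ∈ Metric.sphere (0 : E) 1 := by
    simp [norm_smul, hnorm.ne']
  have h := hle _ ⟨hsmul _ hinv x hx, hunit⟩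
  rwa [hhom _ hinv x hx, inv_pow, inv_mul_eq_div, le_div_iff₀ (pow_pos hnorm d)] at h

theorem monotoneOn_inv_sub_mul_of_hasDerivWithinAt_le {f f' : ℝ → ℝ} {c : ℝ} {D : Set ℝ}
    (hD : Convex ℝ D) (hpos : ∀ t ∈ D, 0 < f t) (hf : ∀ t ∈ D, HasDerivWithinAt f (f' t) D t)
    (hf' : ∀ t ∈ D, f' t ≤ -(c * f t ^ 2)) : MonotoneOn (fun t => (f t)⁻¹ - c * t) D := by
  have hderiv : ∀ t ∈ D, HasDerivWithinAt (fun t => (f t)⁻¹ - c * t)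
      (-f' t / f t ^ 2 - c * 1) D t := fun t ht =>
    ((hf t ht).fun_inv (hpos t ht).ne').fun_sub ((hasDerivWithinAt_id t D).const_mul c)
  refine monotoneOn_of_hasDerivWithinAt_nonneg hD (fun t ht => (hderiv t ht).continuousWithinAt)
    (fun t ht => (hderiv t (interior_subset ht)).mono interior_subset) fun t ht => ?_
  have htD : t ∈ D := interior_subset ht
  rw [mul_one, sub_nonneg, le_div_iff₀ (pow_pos (hpos t htD) 2)]
  exact le_neg_of_le_neg (hf' t htD)

theorem mul_sub_mul_le_one_of_hasDerivWithinAt_le {f f' : ℝ → ℝ} {a b c : ℝ} (hab : a ≤ b)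
    (hc : 0 ≤ c) (hf : ∀ t ∈ Icc a b, HasDerivWithinAt f (f' t) (Icc a b) t)
    (hf' : ∀ t ∈ Icc a b, f' t ≤ -(c * f t ^ 2)) : c * (b - a) * f b ≤ 1 := by
  rcases le_or_gt (f b) 0 with hfb | hfb
  · exact (mul_nonpos_of_nonneg_of_nonpos (mul_nonneg hc (sub_nonneg.mpr hab)) hfb).trans
      zero_le_one
  have hanti : AntitoneOn f (Icc a b) :=
    antitoneOn_of_hasDerivWithinAt_nonpos (convex_Icc a b)
      (fun t ht => (hf t ht).continuousWithinAt)
      (fun t ht => (hf t (interior_subset ht)).mono interior_subset)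
      fun t ht => (hf' t (interior_subset ht)).trans (neg_nonpos.mpr (by positivity))
  have hpos : ∀ t ∈ Icc a b, 0 < f t := fun t ht =>
    hfb.trans_le (hanti ht (right_mem_Icc.mpr hab) ht.2)
  have hends : (f a)⁻¹ - c * a ≤ (f b)⁻¹ - c * b :=
    monotoneOn_inv_sub_mul_of_hasDerivWithinAt_le (convex_Icc a b) hpos hf hf'
      (left_mem_Icc.mpr hab) (right_mem_Icc.mpr hab) hab
  have ha : 0 < (f a)⁻¹ := inv_pos.mpr (hpos a (left_mem_Icc.mpr hab))
  calc c * (b - a) * f b ≤ (f b)⁻¹ * f b := by gcongr; linarith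
    _ = 1 := inv_mul_cancel₀ hfb.ne'

section Lax

variable {𝔸 : Type*} [NormedRing 𝔸] [NormedAlgebra ℝ 𝔸]

/-- The Lax equation `L' = [L, P]` on the set of times `s`, with one-sided derivatives at the
endpoints of `s`. The bracket is the ring commutator. -/
def IsLaxPair (L P : ℝ → 𝔸) (s : Set ℝ) : Prop :=
  ∀ t ∈ s, HasDerivWithinAt L ⁅L t, P t⁆ s t

namespace IsLaxPair

variable {L M P : ℝ → 𝔸} {s : Set ℝ}

theorem mul (hL : IsLaxPair L P s) (hM : IsLaxPair M P s) :
    IsLaxPair (fun t => L t * M t) P s := fun t ht => by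
  refine ((hL t ht).mul (hM t ht)).congr_deriv ?_
  simp only [Ring.lie_def]
  noncomm_ring

theorem pow (hL : IsLaxPair L P s) (k : ℕ) : IsLaxPair (fun t => L t ^ k) P s := by
  induction k with
  | zero =>
    intro t _
    simpa only [pow_zero, Ring.lie_def, one_mul, mul_one, sub_self] using
      hasDerivWithinAt_const t s (1 : 𝔸)
  | succ k ih => simpa only [pow_succ] using ih.mul hL

theorem map_eq_of_map_mul_comm (hL : IsLaxPair L P s) (hs : Convex ℝ s) {F : Type*}
    [NormedAddCommGroup F] [NormedSpace ℝ F] (τ : 𝔸 →L[ℝ] F)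
    (hτ : ∀ x y, τ (x * y) = τ (y * x)) {a b : ℝ} (ha : a ∈ s) (hb : b ∈ s) :
    τ (L a) = τ (L b) := by
  have hderiv : ∀ t ∈ s, HasDerivWithinAt (fun t => τ (L t)) 0 s t := fun t ht => by
    refine (τ.hasFDerivAt.comp_hasDerivWithinAt t (hL t ht)).congr_deriv ?_
    rw [Ring.lie_def, map_sub, hτ, sub_self]
  have hbound := hs.norm_image_sub_le_of_norm_hasDerivWithin_le (C := 0) hderiv
    (fun _ _ => norm_zero.le) hb ha
  rwa [zero_mul, norm_le_zero_iff, sub_eq_zero] at hbound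

end IsLaxPair

end Lax

section SelfCommutator

attribute [local instance] Matrix.frobeniusNormedRing Matrix.frobeniusNormedAlgebra

variable {ι 𝕜 : Type*} [Fintype ι] [DecidableEq ι] [RCLike 𝕜]

open scoped ComplexOrder in
theorem eq_zero_of_isNilpotent_of_commute_conjTranspose {M : Matrix ι ι 𝕜} (hM : IsNilpotent M)
    (hcomm : Commute M Mᴴ) : M = 0 :=
  trace_conjTranspose_mul_self_eq_zero_iff.mp
    (isNilpotent_trace_of_isNilpotent (hcomm.symm.isNilpotent_mul_left hM)).eq_zero

omit [DecidableEq ι] in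
theorem trace_conjTranspose_lie_mul_lie {R : Type*} [CommRing R] [StarRing R]
    (M : Matrix ι ι R) :
    (⁅M, Mᴴ⁆ᴴ * ⁅M, Mᴴ⁆).trace = -(2 * (Mᴴ * (M * ⁅M, Mᴴ⁆)).trace) := by
  have hmixed : (M * Mᴴ * (Mᴴ * M)).trace = (Mᴴ * M * (M * Mᴴ)).trace := trace_mul_comm _ _
  have hsquare : (M * Mᴴ * (M * Mᴴ)).trace = (Mᴴ * M * (Mᴴ * M)).trace := by
    rw [Matrix.mul_assoc, trace_mul_comm]
    simp only [Matrix.mul_assoc]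
  simp only [Ring.lie_def, conjTranspose_sub, conjTranspose_mul, conjTranspose_conjTranspose,
    mul_sub, sub_mul, trace_sub, Matrix.mul_assoc] at hmixed hsquare ⊢
  rw [hmixed, hsquare]
  ring

omit [DecidableEq ι] in
theorem frobenius_norm_sq_eq_re_trace {κ : Type*} [Fintype κ] (M : Matrix κ ι 𝕜) :
    ‖M‖ ^ 2 = RCLike.re (Mᴴ * M).trace := by
  rw [frobenius_norm_def, ← Real.sqrt_eq_rpow, Real.sq_sqrt (by positivity), Finset.sum_comm]
  simp only [trace, diag_apply, mul_apply, conjTranspose_apply, map_sum]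
  refine Finset.sum_congr rfl fun i _ => Finset.sum_congr rfl fun j _ => ?_
  rw [RCLike.star_def, RCLike.conj_mul, ← RCLike.ofReal_pow, RCLike.ofReal_re, Real.rpow_two]

variable (ι 𝕜) in
theorem exists_pos_mul_norm_sq_le_norm_lie_conjTranspose :
    ∃ c > 0, ∀ M : Matrix ι ι 𝕜, IsNilpotent M → c * ‖M‖ ^ 2 ≤ ‖⁅M, Mᴴ⁆‖ := by
  have : ProperSpace (Matrix ι ι 𝕜) := FiniteDimensional.proper 𝕜 _
  have hcont : Continuous fun M : Matrix ι ι 𝕜 => ‖⁅M, Mᴴ⁆‖ := by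
    have hconj : Continuous fun M : Matrix ι ι 𝕜 => Mᴴ := continuous_id.matrix_conjTranspose
    exact ((continuous_id.mul hconj).sub (hconj.mul continuous_id)).norm
  have hhom : ∀ r : ℝ, 0 < r → ∀ M ∈ {M : Matrix ι ι 𝕜 | IsNilpotent M},
      ‖⁅r • M, (r • M)ᴴ⁆‖ = r ^ 2 * ‖⁅M, Mᴴ⁆‖ := fun r hr M _ => by
    rw [conjTranspose_smul, star_trivial, Ring.lie_def, Ring.lie_def, smul_mul_smul_comm,
      smul_mul_smul_comm, ← smul_sub, norm_smul, Real.norm_of_nonneg (by positivity), sq]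
  have hpos : ∀ M ∈ {M : Matrix ι ι 𝕜 | IsNilpotent M}, M ≠ 0 → 0 < ‖⁅M, Mᴴ⁆‖ :=
    fun M hM hM0 => norm_pos_iff.mpr fun hlie =>
      hM0 (eq_zero_of_isNilpotent_of_commute_conjTranspose hM (sub_eq_zero.mp hlie))
  obtain ⟨c, hc, hle⟩ := exists_pos_mul_norm_pow_le_of_homogeneous isClosed_setOf_isNilpotent
    (fun r _ M hM => hM.smul r) hcont.continuousOn hhom hpos
  refine ⟨c, hc, fun M hM => ?_⟩
  rcases eq_or_ne M 0 with rfl | hM0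
  · simp
  · exact hle M hM hM0

theorem hasDerivWithinAt_frobenius_norm_sq {A : ℝ → Matrix ι ι 𝕜} {A' : Matrix ι ι 𝕜} {s : Set ℝ}
    {t : ℝ} (hA : HasDerivWithinAt A A' s t) :
    HasDerivWithinAt (fun t => ‖A t‖ ^ 2) (2 * RCLike.re ((A t)ᴴ * A').trace) s t := by
  have hconj : HasDerivWithinAt (fun t => (A t)ᴴ) A'ᴴ s t := hA.star
  let reTrace : Matrix ι ι 𝕜 →L[ℝ] ℝ :=
    (RCLike.reLm ∘ₗ traceLinearMap ι ℝ 𝕜).toContinuousLinearMap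
  have hre := reTrace.hasFDerivAt.comp_hasDerivWithinAt t (hconj.mul hA)
  simp only [frobenius_norm_sq_eq_re_trace]
  refine hre.congr_deriv ?_
  change RCLike.re (A'ᴴ * A t + (A t)ᴴ * A').trace = _
  have hstar : (A'ᴴ * A t).trace = star ((A t)ᴴ * A').trace := by
    rw [← trace_conjTranspose, conjTranspose_mul, conjTranspose_conjTranspose]
  rw [trace_add, map_add, hstar, RCLike.star_def, RCLike.conj_re, two_mul]

/-- The flow `A' = A[A, A*]` on `[0, ∞)`, with a one-sided derivative at `0`. -/
def IsSelfCommutatorFlow (A : ℝ → Matrix ι ι 𝕜) : Prop :=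
  ∀ t ∈ Ici (0 : ℝ), HasDerivWithinAt A (A t * ⁅A t, (A t)ᴴ⁆) (Ici 0) t

namespace IsSelfCommutatorFlow

variable {A : ℝ → Matrix ι ι 𝕜}

theorem isLaxPair (hA : IsSelfCommutatorFlow A) :
    IsLaxPair A (fun t => A t * (A t)ᴴ) (Ici 0) := fun t ht => by
  refine (hA t ht).congr_deriv ?_
  simp only [Ring.lie_def]
  noncomm_ring

theorem trace_pow_eq (hA : IsSelfCommutatorFlow A) (k : ℕ) {s t : ℝ} (hs : 0 ≤ s) (ht : 0 ≤ t) :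
    (A s ^ k).trace = (A t ^ k).trace :=
  (hA.isLaxPair.pow k).map_eq_of_map_mul_comm (convex_Ici 0)
    (traceLinearMap ι ℝ 𝕜).toContinuousLinearMap trace_mul_comm hs ht

theorem isNilpotent_iff (hA : IsSelfCommutatorFlow A) {s t : ℝ} (hs : 0 ≤ s) (ht : 0 ≤ t) :
    IsNilpotent (A s) ↔ IsNilpotent (A t) := by
  simp only [isNilpotent_iff_forall_trace_pow_eq_zero, hA.trace_pow_eq _ hs ht]

theorem hasDerivWithinAt_norm_sq (hA : IsSelfCommutatorFlow A) {t : ℝ} (ht : 0 ≤ t) :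
    HasDerivWithinAt (fun t => ‖A t‖ ^ 2) (-‖⁅A t, (A t)ᴴ⁆‖ ^ 2) (Ici 0) t := by
  refine (hasDerivWithinAt_frobenius_norm_sq (hA t ht)).congr_deriv ?_
  rw [frobenius_norm_sq_eq_re_trace, trace_conjTranspose_lie_mul_lie, map_neg, neg_neg,
    RCLike.ofNat_mul_re]

theorem isNilpotent_of_tendsto_zero (hA : IsSelfCommutatorFlow A)
    (hlim : Tendsto A atTop (nhds 0)) : IsNilpotent (A 0) := by
  refine isNilpotent_of_forall_trace_pow_eq_zero fun k hk => ?_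
  have htrace : Tendsto (fun t => (A t ^ k).trace) atTop (nhds 0) := by
    have hcont : Continuous fun M : Matrix ι ι 𝕜 => (M ^ k).trace :=
      (continuous_pow k).matrix_trace
    simpa only [Function.comp_def, zero_pow hk, trace_zero] using
      hcont.continuousAt.tendsto.comp hlim
  refine tendsto_nhds_unique (tendsto_const_nhds.congr' ?_) htrace
  filter_upwards [eventually_ge_atTop 0] with t ht using hA.trace_pow_eq k le_rfl ht

theorem exists_pos_mul_norm_sq_le_one (hA : IsSelfCommutatorFlow A) (h0 : IsNilpotent (A 0)) :
    ∃ c > 0, ∀ t, 0 ≤ t → c * t * ‖A t‖ ^ 2 ≤ 1 := by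
  obtain ⟨c, hc, hle⟩ := exists_pos_mul_norm_sq_le_norm_lie_conjTranspose ι 𝕜
  refine ⟨c ^ 2, pow_pos hc 2, fun t ht => ?_⟩
  have hdecay := mul_sub_mul_le_one_of_hasDerivWithinAt_le ht (sq_nonneg c)
    (fun s hs => (hA.hasDerivWithinAt_norm_sq hs.1).mono Icc_subset_Ici_self) fun s hs => by
      rw [← mul_pow, neg_le_neg_iff]
      gcongr
      exact hle _ ((hA.isNilpotent_iff le_rfl hs.1).mp h0)
  rwa [sub_zero] at hdecay

theorem tendsto_zero_of_isNilpotent (hA : IsSelfCommutatorFlow A) (h0 : IsNilpotent (A 0)) :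
    Tendsto A atTop (nhds 0) := by
  obtain ⟨c, hc, hle⟩ := hA.exists_pos_mul_norm_sq_le_one h0
  have hinv : Tendsto (fun t => 1 / (c * t)) atTop (nhds 0) :=
    tendsto_const_nhds.div_atTop (tendsto_id.const_mul_atTop hc)
  have hsq : Tendsto (fun t => ‖A t‖ ^ 2) atTop (nhds 0) := by
    refine squeeze_zero' (.of_forall fun t => sq_nonneg _) ?_ hinv
    filter_upwards [eventually_gt_atTop 0] with t ht
    rw [le_div_iff₀' (mul_pos hc ht)]
    exact hle t ht.le
  refine tendsto_zero_iff_norm_tendsto_zero.mpr ?_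
  simpa only [Real.sqrt_sq (norm_nonneg _), Real.sqrt_zero] using hsq.sqrt

end IsSelfCommutatorFlow

end SelfCommutator

theorem stmt10_general {ι 𝕜 : Type*} [Fintype ι] [DecidableEq ι] [RCLike 𝕜]
    {A : ℝ → Matrix ι ι 𝕜}
    (hA : ∀ t ∈ Ici (0 : ℝ),
      HasDerivWithinAt A (A t * (A t * (A t)ᴴ - (A t)ᴴ * A t)) (Ici 0) t) :
    Tendsto A atTop (nhds 0) ↔ IsNilpotent (A 0) :=
  have hflow : IsSelfCommutatorFlow A := hA
  ⟨hflow.isNilpotent_of_tendsto_zero, hflow.tendsto_zero_of_isNilpotent⟩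

theorem stmt10 {n : ℕ} {A : ℝ → Matrix (Fin n) (Fin n) ℂ}
    (hA : ∀ t ∈ Ici (0 : ℝ),
      HasDerivWithinAt A (A t * (A t * (A t)ᴴ - (A t)ᴴ * A t)) (Ici 0) t) :
    Tendsto A atTop (nhds 0) ↔ IsNilpotent (A 0) :=
  stmt10_general hA
end

section
/- Let B₁ be a complex k×m matrix and B₂ a complex m×m matrix such that no nonzero vector v ∈ ℂ^m satisfies both B₁v = 0 and B₂v = 0, and let B ∈ M_{k+m}(ℂ) be the block matrix with blocks ((0, B₁), (0, B₂)). Then B·[B, B*] = −B if and only if B₁B₂* = 0 and B₁*B₁ − [B₂, B₂*] = Id_m. -/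
/-!
STATEMENT 12: Let B₁ ∈ M_{k×m}(ℂ), B₂ ∈ M_m(ℂ) with ker B₁ ∩ ker B₂ = 0, and
B = ((0,B₁),(0,B₂)) the block matrix. Then B[B,B*] = −B iff B₁B₂* = 0 and
B₁*B₁ − [B₂,B₂*] = Id.
-/

open Matrix

/-!
Since `B[B, B*] + B = B([B, B*] + 1)`, and a product with `B` on the left only sees the lower block
row of the other factor, the equation `B[B, B*] = -B` says that both `B₁` and `B₂` annihilate the
lower block row of `[B, B*] + 1`. As they have no common kernel, that row must vanish; its two
entries are `B₂B₁* = (B₁B₂*)*` and `1 - (B₁*B₁ - [B₂, B₂*])`.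
-/

variable {R k l m n p q : Type*}

section NonUnitalNonAssocSemiring

variable [NonUnitalNonAssocSemiring R] [Fintype m]

theorem mul_eq_zero_and_mul_eq_zero_iff {A : Matrix k m R} {B : Matrix l m R}
    (hker : ∀ v : m → R, A *ᵥ v = 0 → B *ᵥ v = 0 → v = 0) {X : Matrix m n R} :
    A * X = 0 ∧ B * X = 0 ↔ X = 0 := by
  refine ⟨fun ⟨hA, hB⟩ ↦ ext_col fun j ↦ hker (X.col j) ?_ ?_, fun hX ↦ by simp [hX]⟩
  · exact congrArg (·.col j) hA
  · exact congrArg (·.col j) hB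

theorem fromBlocks_zero_left_mul_fromBlocks [Fintype n] (A : Matrix k m R) (B : Matrix l m R)
    (X₁₁ : Matrix n p R) (X₁₂ : Matrix n q R) (X₂₁ : Matrix m p R) (X₂₂ : Matrix m q R) :
    fromBlocks (0 : Matrix k n R) A (0 : Matrix l n R) B * fromBlocks X₁₁ X₁₂ X₂₁ X₂₂ =
      fromBlocks (A * X₂₁) (A * X₂₂) (B * X₂₁) (B * X₂₂) := by
  simp only [fromBlocks_multiply, Matrix.zero_mul, zero_add]

theorem fromBlocks_zero_left_mul_fromBlocks_eq_zero_iff [Fintype n] {A : Matrix k m R}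
    {B : Matrix l m R} (hker : ∀ v : m → R, A *ᵥ v = 0 → B *ᵥ v = 0 → v = 0)
    {X₁₁ : Matrix n p R} {X₁₂ : Matrix n q R} {X₂₁ : Matrix m p R} {X₂₂ : Matrix m q R} :
    fromBlocks (0 : Matrix k n R) A (0 : Matrix l n R) B * fromBlocks X₁₁ X₁₂ X₂₁ X₂₂ = 0 ↔
      X₂₁ = 0 ∧ X₂₂ = 0 := by
  rw [fromBlocks_zero_left_mul_fromBlocks, ← fromBlocks_zero, fromBlocks_inj,
    ← mul_eq_zero_and_mul_eq_zero_iff hker (X := X₂₁),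
    ← mul_eq_zero_and_mul_eq_zero_iff hker (X := X₂₂)]
  tauto

theorem mul_conjTranspose_eq_zero_comm [StarRing R] {A : Matrix k m R} {B : Matrix l m R} :
    A * Bᴴ = 0 ↔ B * Aᴴ = 0 := by
  rw [← conjTranspose_eq_zero, conjTranspose_mul, conjTranspose_conjTranspose]

end NonUnitalNonAssocSemiring

theorem fromBlocks_zero_left_commutator_conjTranspose [NonUnitalNonAssocRing R] [StarRing R]
    [Fintype k] [Fintype m] (B₁ : Matrix k m R) (B₂ : Matrix m m R) :
    fromBlocks 0 B₁ 0 B₂ * (fromBlocks 0 B₁ 0 B₂)ᴴ -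
        (fromBlocks 0 B₁ 0 B₂)ᴴ * fromBlocks 0 B₁ 0 B₂ =
      fromBlocks (B₁ * B₁ᴴ) (B₁ * B₂ᴴ) (B₂ * B₁ᴴ)
        (-(B₁ᴴ * B₁ - (B₂ * B₂ᴴ - B₂ᴴ * B₂))) := by
  have hlower : B₂ * B₂ᴴ =
      -(B₁ᴴ * B₁ - (B₂ * B₂ᴴ - B₂ᴴ * B₂)) + (B₁ᴴ * B₁ + B₂ᴴ * B₂) := by
    abel
  rw [sub_eq_iff_eq_add]
  simp only [fromBlocks_conjTranspose, fromBlocks_multiply, fromBlocks_add, conjTranspose_zero,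
    Matrix.zero_mul, Matrix.mul_zero, zero_add, add_zero, ← hlower]

theorem stmt12_general [NonAssocRing R] [StarRing R] [Fintype k] [Fintype m] [DecidableEq m]
    (B₁ : Matrix k m R) (B₂ : Matrix m m R)
    (hker : ∀ v : m → R, B₁ *ᵥ v = 0 → B₂ *ᵥ v = 0 → v = 0)
    (B : Matrix (k ⊕ m) (k ⊕ m) R) (hB : B = fromBlocks 0 B₁ 0 B₂) :
    B * (B * Bᴴ - Bᴴ * B) = -B ↔
      B₁ * B₂ᴴ = 0 ∧ B₁ᴴ * B₁ - (B₂ * B₂ᴴ - B₂ᴴ * B₂) = 1 := by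
  classical
  have hcommutator : B * Bᴴ - Bᴴ * B + 1 =
      fromBlocks (B₁ * B₁ᴴ + 1) (B₁ * B₂ᴴ) (B₂ * B₁ᴴ)
        (-(B₁ᴴ * B₁ - (B₂ * B₂ᴴ - B₂ᴴ * B₂)) + 1) := by
    rw [hB, fromBlocks_zero_left_commutator_conjTranspose, ← fromBlocks_one, fromBlocks_add,
      add_zero, add_zero]
  calc B * (B * Bᴴ - Bᴴ * B) = -B
    _ ↔ B * (B * Bᴴ - Bᴴ * B + 1) = 0 := by
      rw [Matrix.mul_add, Matrix.mul_one, add_eq_zero_iff_eq_neg]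
    _ ↔ B₂ * B₁ᴴ = 0 ∧ -(B₁ᴴ * B₁ - (B₂ * B₂ᴴ - B₂ᴴ * B₂)) + 1 = 0 := by
      rw [hcommutator, hB, fromBlocks_zero_left_mul_fromBlocks_eq_zero_iff hker]
    _ ↔ B₁ * B₂ᴴ = 0 ∧ B₁ᴴ * B₁ - (B₂ * B₂ᴴ - B₂ᴴ * B₂) = 1 := by
      rw [mul_conjTranspose_eq_zero_comm, neg_add_eq_zero]

theorem stmt12 {k m : ℕ} (B₁ : Matrix (Fin k) (Fin m) ℂ) (B₂ : Matrix (Fin m) (Fin m) ℂ)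
    (hker : ∀ v : Fin m → ℂ, B₁.mulVec v = 0 → B₂.mulVec v = 0 → v = 0)
    (B : Matrix (Fin k ⊕ Fin m) (Fin k ⊕ Fin m) ℂ)
    (hB : B = Matrix.fromBlocks 0 B₁ 0 B₂) :
    B * (B * Bᴴ - Bᴴ * B) = -B ↔
      B₁ * B₂ᴴ = 0 ∧ B₁ᴴ * B₁ - (B₂ * B₂ᴴ - B₂ᴴ * B₂) = 1 :=
  stmt12_general B₁ B₂ hker B hB
end

section
/- Let B, B' ∈ M_n(ℂ) be nilpotent matrices satisfying B·[B,B*] = −B and B'·[B',B'*] = −B'. If B' = gBg⁻¹ for some invertible g ∈ M_n(ℂ), then there exists a unitary U ∈ M_n(ℂ) with B' = UBU*. (Nilpotent almost-abelian HCF⁺ solitons are unique up to unitary equivalence within a similarity class.) -/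
/-!
STATEMENT 14: Nilpotent B, B' ∈ M_n(ℂ) with B[B,B*] = −B and B'[B',B'*] = −B' that are
similar (B' = gBg⁻¹, g invertible) are unitarily equivalent: B' = UBU* for some unitary U.
-/

open Matrix

/-!
Put `T = A A*`. The equation `A [A, A*] = -A` says `T A = A (T + 1)`, so `A` raises eigenvalues of
`T` by one; in particular `A` is nilpotent, and if `A x = 0` and `T x = μ x`, then
`A (A* ^ (j + 1)) x = (μ - j) (A* ^ j) x`. Filter `ker A` by the subspaces `ker A ∩ range (A ^ k)`.
They are `T`-invariant, `T` acts on the `k`-th orthogonal difference of the filtration as the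
scalar `k`, and their dimensions are similarity invariants. The vectors `(A* ^ j) x`, with `x` in
one of these differences, span the space, and their Gram matrix only involves `k`, `j` and the
inner products of the `x`. Hence isometries between corresponding differences of two similar
solutions extend to a unitary map of the whole space that intertwines the two solutions.
-/

open Module Submodule

open scoped InnerProductSpace

section SemiconjBy

variable {R : Type*} [Ring R] {a t : R}

theorem semiconjBy_pow_add_natCast (h : SemiconjBy a (t + 1) t) (k : ℕ) :
    SemiconjBy (a ^ k) (t + k) t := by
  induction k with
  | zero => simp
  | succ k ih =>
    have h_shift : SemiconjBy a (t + (k + 1 : ℕ)) (t + k) := by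
      convert h.add_right (Nat.cast_commute k a).symm using 1
      push_cast
      abel
    rw [pow_succ]
    exact ih.mul_left h_shift

theorem isNilpotent_of_semiconjBy_add_one (K : Type*) [Field K] [CharZero K] [Algebra K R]
    [FiniteDimensional K R] (h : SemiconjBy a (t + 1) t) : IsNilpotent a := by
  by_contra h_nil
  let adjointAction : End K R := LinearMap.mulLeft K t - LinearMap.mulRight K t
  have h_eigen (k : ℕ) : adjointAction.HasEigenvalue (k : K) := by
    refine End.hasEigenvalue_of_hasEigenvector (x := a ^ k)
      ⟨End.mem_eigenspace_iff.2 ?_, fun h_zero => h_nil ⟨k, h_zero⟩⟩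
    have h_comm : a ^ k * (t + k) = t * a ^ k := semiconjBy_pow_add_natCast h k
    simp [adjointAction, ← h_comm, mul_add, Algebra.smul_def, (Nat.cast_commute k (a ^ k)).eq]
  exact Set.infinite_of_injective_forall_mem Nat.cast_injective h_eigen
    adjointAction.finite_hasEigenvalue

end SemiconjBy

section Soliton

/-- The algebraic equation `a [a, a*] = -a` characterising HCF⁺ solitons on almost-abelian Lie
algebras, for an element of a ring with a star operation. -/
def IsHCFSoliton {R : Type*} [Ring R] [Star R] (a : R) : Prop :=
  a * ⁅a, star a⁆ = -a

theorem IsHCFSoliton.map {R S F : Type*} [Ring R] [Star R] [Ring S] [Star S] [FunLike F R S]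
    [RingHomClass F R S] [StarHomClass F R S] {a : R} (φ : F) (h : IsHCFSoliton a) :
    IsHCFSoliton (φ a) := by
  simpa only [IsHCFSoliton, Ring.lie_def, map_mul, map_sub, map_neg, map_star]
    using congrArg φ h

variable {R : Type*} [Ring R] [StarRing R] {a : R}

theorem IsHCFSoliton.semiconjBy (h : IsHCFSoliton a) :
    SemiconjBy a (a * star a + 1) (a * star a) := by
  rw [IsHCFSoliton, Ring.lie_def, mul_sub, sub_eq_iff_eq_add] at h
  rw [SemiconjBy, mul_add, h, mul_one, mul_assoc]
  abel

theorem IsHCFSoliton.mul_star_pow_succ (h : IsHCFSoliton a) (k : ℕ) :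
    a * star a ^ (k + 1) = star a ^ k * (a * star a - k) := by
  have h_star := (semiconjBy_pow_add_natCast h.semiconjBy k).star_star_star.eq
  simp only [star_pow, star_mul, star_star, star_add, star_natCast] at h_star
  rw [mul_sub, h_star, add_mul, (Nat.cast_commute k _).eq, add_sub_cancel_right, pow_succ',
    mul_assoc]

end Soliton

section KerRange

variable {K V W : Type*} [Semiring K] [AddCommMonoid V] [Module K V]
  [AddCommMonoid W] [Module K W]

/-- The filtration `ker A ∩ range (A ^ k)` of the kernel of `A`. -/
def kerRange (A : End K V) (k : ℕ) : Submodule K V :=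
  LinearMap.ker A ⊓ LinearMap.range (A ^ k)

theorem kerRange_zero (A : End K V) : kerRange A 0 = LinearMap.ker A := by
  simp [kerRange, End.one_eq_id]

theorem kerRange_antitone (A : End K V) : Antitone (kerRange A) :=
  fun _ _ hkl => inf_le_inf_left _ (A.iterateRange.monotone hkl)

theorem map_kerRange {A : End K V} {A' : End K W} (g : V ≃ₗ[K] W)
    (hg : Function.Semiconj g A A') (k : ℕ) :
    (kerRange A k).map (g : V →ₗ[K] W) = kerRange A' k := by
  have h_pow (x : V) : g ((A ^ k) x) = (A' ^ k) (g x) := by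
    simpa only [End.pow_apply] using hg.iterate_right k x
  ext y
  obtain ⟨x, rfl⟩ := g.surjective y
  have h_ker : A' (g x) = 0 ↔ A x = 0 := by rw [← hg x, g.map_eq_zero_iff]
  have h_range : (∃ w, (A' ^ k) w = g x) ↔ ∃ v, (A ^ k) v = x := by
    simp only [g.surjective.exists, ← h_pow, g.injective.eq_iff]
  simp [kerRange, h_ker, h_range]

theorem eq_zero_of_forall_pow_apply_mem {A : End K V} (hA : IsNilpotent A) {p : Submodule K V}
    (hp : Disjoint p (LinearMap.ker A)) {z : V} (hz : ∀ j, (A ^ j) z ∈ p) : z = 0 := by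
  obtain ⟨N, hN⟩ := hA
  have h_descent (j : ℕ) (hj : (A ^ j) z = 0) : z = 0 := by
    induction j with
    | zero => simpa using hj
    | succ j ih =>
      rw [pow_succ', End.mul_apply] at hj
      exact ih (disjoint_def.1 hp _ (hz j) hj)
  exact h_descent N (by simp [hN])

end KerRange

section InnerProductSpace

variable {𝕜 E E' : Type*} [RCLike 𝕜] [NormedAddCommGroup E] [InnerProductSpace 𝕜 E]
  [NormedAddCommGroup E'] [InnerProductSpace 𝕜 E']

theorem norm_linearCombination_eq_of_inner_eq {ι : Type*} {f : ι → E} {f' : ι → E'}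
    (h : ∀ i j, ⟪f i, f j⟫_𝕜 = ⟪f' i, f' j⟫_𝕜) (c : ι →₀ 𝕜) :
    ‖Finsupp.linearCombination 𝕜 f c‖ = ‖Finsupp.linearCombination 𝕜 f' c‖ := by
  simp only [@norm_eq_sqrt_re_inner 𝕜, Finsupp.linearCombination_apply, Finsupp.sum_inner,
    Finsupp.inner_sum, inner_smul_left, inner_smul_right, h]

theorem exists_linearIsometry_of_inner_eq {ι : Type*} {f : ι → E} {f' : ι → E'}
    (hf : span 𝕜 (Set.range f) = ⊤) (h : ∀ i j, ⟪f i, f j⟫_𝕜 = ⟪f' i, f' j⟫_𝕜) :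
    ∃ U : E →ₗᵢ[𝕜] E', ∀ i, U (f i) = f' i := by
  let L := Finsupp.linearCombination 𝕜 f
  let L' := Finsupp.linearCombination 𝕜 f'
  have h_norm (c : ι →₀ 𝕜) : ‖L c‖ = ‖L' c‖ := norm_linearCombination_eq_of_inner_eq h c
  obtain ⟨s, hs⟩ := L.exists_rightInverse_of_surjective
    ((Finsupp.range_linearCombination 𝕜).trans hf)
  have h_section (x : E) : L (s x) = x := LinearMap.congr_fun hs x
  refine ⟨⟨L' ∘ₗ s, fun x => ?_⟩, fun i => ?_⟩
  · rw [LinearMap.comp_apply, ← h_norm, h_section]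
  · have h_diff : L' (s (f i) - Finsupp.single i 1) = 0 := by
      rw [← norm_eq_zero, ← h_norm, map_sub, h_section]
      simp [L]
    simpa [L', sub_eq_zero] using h_diff

theorem nonempty_linearIsometryEquiv_of_finrank_eq [FiniteDimensional 𝕜 E]
    [FiniteDimensional 𝕜 E'] (h : finrank 𝕜 E = finrank 𝕜 E') : Nonempty (E ≃ₗᵢ[𝕜] E') :=
  ⟨(stdOrthonormalBasis 𝕜 E).equiv (stdOrthonormalBasis 𝕜 E') (finCongr h)⟩

/-- The orthogonal complement of `F (k + 1)` in `F k`, realising the `k`-th graded piece of a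
decreasing filtration `F` as a subspace. -/
def gradedPiece (F : ℕ → Submodule 𝕜 E) (k : ℕ) : Submodule 𝕜 E :=
  (F (k + 1))ᗮ ⊓ F k

theorem isOrtho_gradedPiece {F : ℕ → Submodule 𝕜 E} (hF : Antitone F) {k l : ℕ} (hkl : k ≠ l) :
    gradedPiece F k ⟂ gradedPiece F l := by
  wlog h_lt : k < l generalizing k l
  · exact (this hkl.symm (hkl.lt_or_gt.resolve_left h_lt)).symm
  exact (isOrtho_orthogonal_left (F (k + 1))).mono inf_le_left (inf_le_right.trans (hF h_lt))

variable [FiniteDimensional 𝕜 E] [FiniteDimensional 𝕜 E']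

theorem sup_gradedPiece {F : ℕ → Submodule 𝕜 E} (hF : Antitone F) (k : ℕ) :
    F (k + 1) ⊔ gradedPiece F k = F k :=
  sup_orthogonal_inf_of_hasOrthogonalProjection (hF k.le_succ)

theorem le_iSup_gradedPiece {F : ℕ → Submodule 𝕜 E} (hF : Antitone F) {N : ℕ} (hN : F N = ⊥) :
    F 0 ≤ ⨆ k, gradedPiece F k := by
  have h_le (n : ℕ) : F 0 ≤ F n ⊔ ⨆ k, gradedPiece F k := by
    induction n with
    | zero => exact le_sup_left
    | succ n ih =>
      refine ih.trans (sup_le ?_ le_sup_right)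
      rw [← sup_gradedPiece hF n]
      exact sup_le_sup_left (le_iSup (gradedPiece F) n) _
  simpa [hN] using h_le N

theorem finrank_gradedPiece_eq {F : ℕ → Submodule 𝕜 E} {F' : ℕ → Submodule 𝕜 E'} (hF : Antitone F)
    (hF' : Antitone F') (h : ∀ k, finrank 𝕜 (F k) = finrank 𝕜 (F' k)) (k : ℕ) :
    finrank 𝕜 (gradedPiece F k) = finrank 𝕜 (gradedPiece F' k) := by
  have h_add := finrank_add_inf_finrank_orthogonal (hF k.le_succ)
  have h_add' := finrank_add_inf_finrank_orthogonal (hF' k.le_succ)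
  rw [h, h] at h_add
  exact Nat.add_left_cancel (h_add.trans h_add'.symm)

theorem inner_star_apply_left (A : End 𝕜 E) (x y : E) : ⟪star A x, y⟫_𝕜 = ⟪x, A y⟫_𝕜 :=
  LinearMap.adjoint_inner_left A y x

theorem inner_star_apply_right (A : End 𝕜 E) (x y : E) : ⟪x, star A y⟫_𝕜 = ⟪A x, y⟫_𝕜 :=
  LinearMap.adjoint_inner_right A x y

theorem semiconj_of_semiconj_star {A : End 𝕜 E} {A' : End 𝕜 E'} (U : E ≃ₗᵢ[𝕜] E')
    (hU : Function.Semiconj U ⇑(star A) ⇑(star A')) : Function.Semiconj U A A' := by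
  refine fun x => ext_inner_left 𝕜 fun w => ?_
  obtain ⟨z, rfl⟩ := U.surjective w
  calc ⟪U z, U (A x)⟫_𝕜 = ⟪star A z, x⟫_𝕜 := by rw [U.inner_map_map, inner_star_apply_left]
    _ = ⟪star A' (U z), U x⟫_𝕜 := by rw [← hU z, U.inner_map_map]
    _ = ⟪U z, A' (U x)⟫_𝕜 := inner_star_apply_left A' _ _

namespace IsHCFSoliton

variable {A : End 𝕜 E}

theorem mul_star_apply_sub_mem_kerRange (h : IsHCFSoliton A) {k : ℕ} {x : E}
    (hx : x ∈ kerRange A k) : (A * star A) x - (k : 𝕜) • x ∈ kerRange A (k + 1) := by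
  obtain ⟨h_ker, y, rfl⟩ := hx
  refine ⟨?_, star A y, ?_⟩
  · have h_comm := LinearMap.congr_fun h.semiconjBy.eq ((A ^ k) y)
    have h_zero : A ((A ^ k) y) = 0 := h_ker
    simpa [h_zero, mul_add] using h_comm
  · have h_comm := LinearMap.congr_fun (semiconjBy_pow_add_natCast h.semiconjBy k).eq y
    rw [eq_sub_iff_add_eq, ← End.mul_apply (A * star A), ← End.mul_apply, ← h_comm]
    simp [pow_succ, mul_add, Nat.cast_smul_eq_nsmul]

theorem mul_star_apply_mem_kerRange (h : IsHCFSoliton A) {k : ℕ} {x : E}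
    (hx : x ∈ kerRange A k) : (A * star A) x ∈ kerRange A k := by
  have h_mem := kerRange_antitone A k.le_succ (h.mul_star_apply_sub_mem_kerRange hx)
  simpa using add_mem h_mem (smul_mem _ (k : 𝕜) hx)

theorem mul_star_apply_of_mem_gradedPiece (h : IsHCFSoliton A) {k : ℕ} {x : E}
    (hx : x ∈ gradedPiece (kerRange A) k) : (A * star A) x = (k : 𝕜) • x := by
  obtain ⟨h_perp, h_mem⟩ := mem_inf.1 hx
  have h_diff_perp : (A * star A) x - (k : 𝕜) • x ∈ (kerRange A (k + 1))ᗮ := by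
    refine sub_mem ((mem_orthogonal _ _).2 fun z hz => ?_) (smul_mem _ _ h_perp)
    rw [← inner_star_apply_left, star_mul, star_star]
    exact (mem_orthogonal _ _).1 h_perp _ (h.mul_star_apply_mem_kerRange hz)
  exact sub_eq_zero.1 (disjoint_def.1 (orthogonal_disjoint _) _
    (h.mul_star_apply_sub_mem_kerRange h_mem) h_diff_perp)

theorem inner_star_pow_apply (h : IsHCFSoliton A) {x y : E} (hx : A x = 0) (hy : A y = 0) {μ : 𝕜}
    (hμ : (A * star A) y = μ • y) (i j : ℕ) :
    ⟪(star A ^ i) x, (star A ^ j) y⟫_𝕜 =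
      if i = j then (descPochhammer 𝕜 j).eval μ * ⟪x, y⟫_𝕜 else 0 := by
  induction i generalizing j with
  | zero =>
    cases j with
    | zero => simp
    | succ j => simp [pow_succ', inner_star_apply_right, hx]
  | succ i ih =>
    rw [pow_succ', End.mul_apply, inner_star_apply_left]
    cases j with
    | zero => simp [hy]
    | succ j =>
      have h_lower : A ((star A ^ (j + 1)) y) = (μ - j) • (star A ^ j) y := by
        rw [← End.mul_apply, h.mul_star_pow_succ, End.mul_apply, LinearMap.sub_apply, hμ]
        simp [sub_smul, Nat.cast_smul_eq_nsmul]
      rw [h_lower, inner_smul_right, ih, descPochhammer_succ_eval]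
      simp only [Nat.add_right_cancel_iff, mul_ite, mul_zero]
      congr 1
      ring

end IsHCFSoliton

/-- The vectors `(A* ^ j) x`, where `x` lies in a graded piece of the filtration `kerRange A`. -/
noncomputable def ladder (A : End 𝕜 E) (p : (Σ k, gradedPiece (kerRange A) k) × ℕ) : E :=
  (star A ^ p.2) (p.1.2 : E)

theorem star_apply_ladder (A : End 𝕜 E) (p : (Σ k, gradedPiece (kerRange A) k) × ℕ) :
    star A (ladder A p) = ladder A (p.1, p.2 + 1) := by
  rw [ladder, ladder, pow_succ', End.mul_apply]

theorem span_range_ladder {A : End 𝕜 E} (hA : IsNilpotent A) :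
    span 𝕜 (Set.range (ladder A)) = ⊤ := by
  obtain ⟨N, hN⟩ := hA
  have h_bot : kerRange A N = ⊥ := by simp [kerRange, hN]
  rw [← orthogonal_eq_bot_iff, eq_bot_iff]
  intro z hz
  refine eq_zero_of_forall_pow_apply_mem ⟨N, hN⟩ (orthogonal_disjoint _).symm fun j => ?_
  have h_piece (k : ℕ) : gradedPiece (kerRange A) k ≤ (𝕜 ∙ (A ^ j) z)ᗮ := by
    intro x hx
    rw [mem_orthogonal_singleton_iff_inner_left, ← inner_star_apply_left, star_pow]
    exact (mem_orthogonal _ _).1 hz _ (subset_span ⟨(⟨k, x, hx⟩, j), rfl⟩)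
  have h_ker : LinearMap.ker A ≤ (𝕜 ∙ (A ^ j) z)ᗮ := by
    rw [← kerRange_zero]
    exact (le_iSup_gradedPiece (kerRange_antitone A) h_bot).trans (iSup_le h_piece)
  exact (mem_orthogonal _ _).2 fun x hx => mem_orthogonal_singleton_iff_inner_left.1 (h_ker hx)

theorem IsHCFSoliton.inner_ladder_eq {A : End 𝕜 E} {A' : End 𝕜 E'} (h : IsHCFSoliton A)
    (h' : IsHCFSoliton A')
    (V : ∀ k, gradedPiece (kerRange A) k ≃ₗᵢ[𝕜] gradedPiece (kerRange A') k)
    (p q : (Σ k, gradedPiece (kerRange A) k) × ℕ) :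
    ⟪ladder A p, ladder A q⟫_𝕜 =
      ⟪ladder A' (⟨p.1.1, V _ p.1.2⟩, p.2), ladder A' (⟨q.1.1, V _ q.1.2⟩, q.2)⟫_𝕜 := by
  obtain ⟨⟨k, x⟩, i⟩ := p
  obtain ⟨⟨l, y⟩, j⟩ := q
  have h_inner : ⟪(x : E), (y : E)⟫_𝕜 = ⟪(V k x : E'), (V l y : E')⟫_𝕜 := by
    obtain rfl | hkl := eq_or_ne k l
    · exact ((V k).inner_map_map x y).symm
    · rw [(isOrtho_gradedPiece (kerRange_antitone A) hkl).inner_eq x.2 y.2,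
        (isOrtho_gradedPiece (kerRange_antitone A') hkl).inner_eq (V k x).2 (V l y).2]
  simp only [ladder]
  rw [h.inner_star_pow_apply x.2.2.1 y.2.2.1 (h.mul_star_apply_of_mem_gradedPiece y.2),
    h'.inner_star_pow_apply (V k x).2.2.1 (V l y).2.2.1
      (h'.mul_star_apply_of_mem_gradedPiece (V l y).2), h_inner]

theorem IsHCFSoliton.exists_linearIsometryEquiv {A : End 𝕜 E} {A' : End 𝕜 E'}
    (h : IsHCFSoliton A) (h' : IsHCFSoliton A') (g : E ≃ₗ[𝕜] E')
    (hg : Function.Semiconj g A A') : ∃ U : E ≃ₗᵢ[𝕜] E', Function.Semiconj U A A' := by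
  have h_finrank (k : ℕ) : finrank 𝕜 (kerRange A k) = finrank 𝕜 (kerRange A' k) := by
    rw [← map_kerRange g hg, LinearEquiv.finrank_map_eq]
  have V (k : ℕ) : gradedPiece (kerRange A) k ≃ₗᵢ[𝕜] gradedPiece (kerRange A') k :=
    (nonempty_linearIsometryEquiv_of_finrank_eq
      (finrank_gradedPiece_eq (kerRange_antitone A) (kerRange_antitone A') h_finrank k)).some
  have h_span := span_range_ladder (isNilpotent_of_semiconjBy_add_one 𝕜 h.semiconjBy)
  obtain ⟨U₀, hU₀⟩ := exists_linearIsometry_of_inner_eq h_span (h.inner_ladder_eq h' V)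
  let U := U₀.toLinearIsometryEquiv g.finrank_eq
  have h_star : U₀.toLinearMap ∘ₗ star A = star A' ∘ₗ U₀.toLinearMap := by
    refine LinearMap.ext_on_range h_span fun p => ?_
    simp [star_apply_ladder, hU₀]
  exact ⟨U, semiconj_of_semiconj_star U (LinearMap.congr_fun h_star)⟩

end InnerProductSpace

theorem stmt14_general {𝕜 m : Type*} [RCLike 𝕜] [Fintype m] [DecidableEq m]
    {B B' g : Matrix m m 𝕜}
    (hsolB : B * (B * Bᴴ - Bᴴ * B) = -B)
    (hsolB' : B' * (B' * B'ᴴ - B'ᴴ * B') = -B')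
    (hg : IsUnit g) (hconj : B' = g * B * g⁻¹) :
    ∃ U : Matrix m m 𝕜, U * Uᴴ = 1 ∧ B' = U * B * Uᴴ := by
  let b := EuclideanSpace.basisFun m 𝕜
  let Φ := LinearMap.toMatrixOrthonormal b
  have h_sol : IsHCFSoliton (Φ.symm B) := IsHCFSoliton.map Φ.symm hsolB
  have h_sol' : IsHCFSoliton (Φ.symm B') := IsHCFSoliton.map Φ.symm hsolB'
  let e := LinearEquiv.ofBijective (Φ.symm g) ((End.isUnit_iff _).1 (hg.map Φ.symm))
  have h_semiconj : Φ.symm g * Φ.symm B = Φ.symm B' * Φ.symm g := by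
    have h_det : IsUnit g.det := (isUnit_iff_isUnit_det g).1 hg
    rw [← map_mul, ← map_mul, hconj, nonsing_inv_mul_cancel_right _ _ h_det]
  obtain ⟨U, hU⟩ := h_sol.exists_linearIsometryEquiv h_sol' e (LinearMap.congr_fun h_semiconj)
  have h_unitary : Φ U.toLinearMap * (Φ U.toLinearMap)ᴴ = 1 :=
    mem_unitaryGroup_iff.1 (U.toMatrix_mem_unitaryGroup b b)
  have h_intertwine : Φ U.toLinearMap * B = B' * Φ U.toLinearMap := by
    have h_comp : U.toLinearMap * Φ.symm B = Φ.symm B' * U.toLinearMap := LinearMap.ext hU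
    simpa using congrArg Φ h_comp
  exact ⟨Φ U.toLinearMap, h_unitary, by rw [h_intertwine, mul_assoc, h_unitary, mul_one]⟩

theorem stmt14 {n : ℕ} {B B' g : Matrix (Fin n) (Fin n) ℂ}
    (hB : IsNilpotent B) (hB' : IsNilpotent B')
    (hsolB : B * (B * Bᴴ - Bᴴ * B) = -B)
    (hsolB' : B' * (B' * B'ᴴ - B'ᴴ * B') = -B')
    (hg : IsUnit g) (hconj : B' = g * B * g⁻¹) :
    ∃ U : Matrix (Fin n) (Fin n) ℂ, U * Uᴴ = 1 ∧ B' = U * B * Uᴴ :=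
  stmt14_general hsolB hsolB' hg hconj
end

section
/- For every nilpotent matrix A ∈ M_n(ℂ) there exists an invertible matrix g ∈ M_n(ℂ) such that B := gAg⁻¹ satisfies B·[B,B*] = −B. (Every complex almost-abelian Lie group with nilpotent defining matrix admits a left-invariant HCF⁺ soliton.) -/
/-!
STATEMENT 15: For every nilpotent A ∈ M_n(ℂ) there is an invertible g such that
B := gAg⁻¹ satisfies B[B,B*] = −B.
-/

open Matrix

/-!
In a suitable basis a nilpotent operator is a direct sum of shifts `e_j ↦ e_{j+1}`, and rescaling
the basis turns each of them into the truncated creation operator `B : e_j ↦ √(j+1) e_{j+1}` of the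
harmonic oscillator. On a block of size `m`, `B Bᴴ = diag(0, 1, …, m - 1)` and
`Bᴴ B = diag(1, …, m - 1, 0)`, so `[B, Bᴴ]` is `-1` on every basis vector except the last one, which
`B` kills.
-/

open Polynomial Module

section Soliton

variable {R ι κ : Type*} [NonUnitalNonAssocRing R] [StarRing R] [Fintype ι] [Fintype κ]

/-- The equation `B [B, Bᴴ] = -B`, whose solutions conjugate to a nilpotent matrix `A` give
left-invariant HCF⁺ solitons on the almost-abelian Lie group defined by `A`. -/
def IsSolitonMatrix (B : Matrix ι ι R) : Prop :=
  B * (B * Bᴴ - Bᴴ * B) = -B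

theorem IsSolitonMatrix.submatrix {B : Matrix κ κ R} (hB : IsSolitonMatrix B) (e : ι ≃ κ) :
    IsSolitonMatrix (B.submatrix e e) := by
  have h := congr_arg (·.submatrix e e) hB
  simpa only [IsSolitonMatrix, ← submatrix_mul_equiv _ _ _ e, submatrix_sub, submatrix_neg,
    conjTranspose_submatrix, Pi.sub_apply, Pi.neg_apply] using h

theorem IsSolitonMatrix.blockDiagonal' [DecidableEq ι] {m : ι → Type*} [∀ i, Fintype (m i)]
    {B : ∀ i, Matrix (m i) (m i) R} (hB : ∀ i, IsSolitonMatrix (B i)) :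
    IsSolitonMatrix (blockDiagonal' B) := by
  have h : (fun i => B i * (B i * (B i)ᴴ - (B i)ᴴ * B i)) = -B := funext hB
  rw [IsSolitonMatrix, blockDiagonal'_conjTranspose, ← blockDiagonal'_mul, ← blockDiagonal'_mul,
    ← blockDiagonal'_sub, ← blockDiagonal'_mul, ← blockDiagonal'_neg, ← h]
  rfl

end Soliton

section WeightedShift

/-- The `m × m` matrix of the truncated weighted shift `e_j ↦ w j • e_{j+1}`, `e_{m-1} ↦ 0`. With
all weights `1` it is the nilpotent Jordan block; the weights are indexed by columns. -/
def weightedShift {R : Type*} [Zero R] (w : ℕ → R) (m : ℕ) : Matrix (Fin m) (Fin m) R :=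
  of fun a b => if (a : ℕ) = b + 1 then w b else 0

variable {R : Type*} {w : ℕ → R}

theorem weightedShift_mul_conjTranspose [Semiring R] [StarRing R]
    (hw : ∀ j, w j * star (w j) = j + 1) (m : ℕ) :
    weightedShift w m * (weightedShift w m)ᴴ = diagonal fun a : Fin m => ((a : ℕ) : R) := by
  ext ⟨a, ha⟩ ⟨b, hb⟩
  simp only [weightedShift, mul_apply, conjTranspose_apply, of_apply, diagonal_apply, Fin.mk.injEq]
  cases a with
  | zero => simp
  | succ a =>
    rw [Finset.sum_eq_single ⟨a, by omega⟩]
    · obtain rfl | hab := eq_or_ne b (a + 1)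
      · simp [hw]
      · simp [hab, hab.symm]
    · intro c _ hc
      rw [if_neg (by grind), zero_mul]
    · simp

theorem conjTranspose_mul_weightedShift [CommSemiring R] [StarRing R]
    (hw : ∀ j, w j * star (w j) = j + 1) (m : ℕ) :
    (weightedShift w m)ᴴ * weightedShift w m =
      diagonal fun a : Fin m => if (a : ℕ) + 1 < m then ((a : ℕ) + 1 : R) else 0 := by
  ext a b
  simp only [weightedShift, mul_apply, conjTranspose_apply, of_apply, diagonal_apply]
  split_ifs with hab ha
  · subst hab
    rw [Finset.sum_eq_single ⟨a + 1, ha⟩]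
    · simp [mul_comm, hw]
    · intro c _ hc
      rw [if_neg (by grind), mul_zero]
    · simp
  · exact Finset.sum_eq_zero fun c _ => by rw [if_neg (by omega), star_zero, zero_mul]
  · refine Finset.sum_eq_zero fun c _ => ?_
    obtain hc | hc := eq_or_ne (c : ℕ) (a + 1)
    · rw [if_neg (c := (c : ℕ) = b + 1) (by omega), mul_zero]
    · rw [if_neg hc, star_zero, zero_mul]

theorem isSolitonMatrix_weightedShift [CommRing R] [StarRing R]
    (hw : ∀ j, w j * star (w j) = j + 1) (m : ℕ) :
    IsSolitonMatrix (weightedShift w m) := by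
  rw [IsSolitonMatrix, weightedShift_mul_conjTranspose hw, conjTranspose_mul_weightedShift hw,
    diagonal_sub]
  ext a b
  rw [mul_diagonal, Matrix.neg_apply]
  by_cases hab : (a : ℕ) = b + 1
  · rw [if_pos (hab ▸ a.2)]
    ring
  · simp [weightedShift, hab]

end WeightedShift

section Basis

theorem toMatrix_unitsSMul_apply {R M ι : Type*} [CommRing R] [AddCommGroup M] [Module R M]
    [Fintype ι] [DecidableEq ι] (b : Basis ι R M) (u : ι → Rˣ) (f : M →ₗ[R] M) (i j : ι) :
    LinearMap.toMatrix (b.unitsSMul u) (b.unitsSMul u) f i j =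
      ↑(u i)⁻¹ * LinearMap.toMatrix b b f i j * u j := by
  simp only [LinearMap.toMatrix_apply, Basis.unitsSMul_apply, Basis.repr_unitsSMul, Units.smul_def,
    map_smul, Finsupp.smul_apply, smul_eq_mul]
  ring

theorem exists_toMatrix_eq_blockDiagonal'_weightedShift_units {K V : Type*} [CommRing K]
    [AddCommGroup V] [Module K V] {ι : Type*} [Fintype ι] [DecidableEq ι] {k : ι → ℕ}
    {f : End K V} {b : Basis (Σ i, Fin (k i)) K V}
    (hb : LinearMap.toMatrix b b f = blockDiagonal' fun i => weightedShift 1 (k i)) (w : ℕ → Kˣ) :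
    ∃ b' : Basis (Σ i, Fin (k i)) K V, LinearMap.toMatrix b' b' f =
      blockDiagonal' fun i => weightedShift (fun j => (w j : K)) (k i) := by
  let u (p : Σ i, Fin (k i)) : Kˣ := (∏ j ∈ Finset.range p.2, w j)⁻¹
  refine ⟨b.unitsSMul u, ?_⟩
  ext ⟨i, a⟩ ⟨i', c⟩
  rw [toMatrix_unitsSMul_apply, hb]
  obtain rfl | hi := eq_or_ne i i'
  · simp only [blockDiagonal'_apply_eq, weightedShift, of_apply, Pi.one_apply]
    split_ifs with h
    · simp [u, h, Finset.prod_range_succ, ← Units.val_mul]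
    · simp
  · simp [blockDiagonal'_apply_ne _ _ _ hi]

theorem exists_conj_eq_submatrix_toMatrix {K ι κ : Type*} [CommRing K] [Nontrivial K]
    [Fintype ι] [DecidableEq ι] [Fintype κ] [DecidableEq κ] (A : Matrix ι ι K)
    (b : Basis κ K (ι → K)) :
    ∃ (e : ι ≃ κ) (g : Matrix ι ι K), IsUnit g ∧
      g * A * g⁻¹ = (LinearMap.toMatrix b b (toLin' A)).submatrix e e := by
  let s := Pi.basisFun K ι
  let e := s.indexEquiv b
  let c := b.reindex e.symm
  have hcs : c.toMatrix s * s.toMatrix c = 1 := c.toMatrix_mul_toMatrix_flip s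
  refine ⟨e, c.toMatrix s, .of_mul_eq_one _ hcs, ?_⟩
  rw [inv_eq_right_inv hcs]
  calc c.toMatrix s * A * s.toMatrix c = LinearMap.toMatrix c c (toLin' A) := by
        simpa [s, LinearMap.toMatrix_eq_toMatrix'] using
          basis_toMatrix_mul_linearMap_toMatrix_mul_basis_toMatrix c s c s (toLin' A)
    _ = _ := by
        ext i j
        simp [LinearMap.toMatrix_apply, c]

end Basis

section JordanForm

theorem exists_basis_quotient_X_pow (K : Type*) [CommRing K] [Nontrivial K] (k : ℕ) :
    ∃ c : Basis (Fin k) K (K[X] ⧸ K[X] ∙ (X : K[X]) ^ k),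
      ∀ j, c j = Submodule.Quotient.mk (X ^ (j : ℕ)) := by
  let p := AdjoinRoot.powerBasis' (monic_X_pow (R := K) k)
  have hdim : p.dim = k := natDegree_X_pow k
  have hp (j : Fin k) :
      p.basis.reindex (finCongr hdim) j = AdjoinRoot.mk (X ^ k) (X ^ (j : ℕ)) := by
    simp [p]
  exact ⟨p.basis.reindex (finCongr hdim), hp⟩

theorem exists_basis_toMatrix_lsmul_X_eq_weightedShift (K : Type*) [CommRing K] [Nontrivial K]
    (k : ℕ) :
    ∃ c : Basis (Fin k) K (K[X] ⧸ K[X] ∙ (X : K[X]) ^ k),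
      LinearMap.toMatrix c c (Algebra.lsmul K K _ (X : K[X])) = weightedShift 1 k := by
  obtain ⟨c, hc⟩ := exists_basis_quotient_X_pow K k
  refine ⟨c, ?_⟩
  ext a j
  have hX : (X : K[X]) • c j = Submodule.Quotient.mk (X ^ (j + 1 : ℕ)) := by
    rw [hc, ← Submodule.Quotient.mk_smul, smul_eq_mul, ← pow_succ']
  rw [LinearMap.toMatrix_apply, Algebra.lsmul_apply, hX]
  by_cases hj : (j : ℕ) + 1 < k
  · rw [← hc ⟨j + 1, hj⟩, Basis.repr_self]
    simp [weightedShift, Finsupp.single_apply, Fin.ext_iff, eq_comm]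
  · have hk : (j : ℕ) + 1 = k := by omega
    rw [hk, (Submodule.Quotient.mk_eq_zero _).2 (Submodule.mem_span_singleton_self _)]
    simp [weightedShift, hk, a.2.ne]

theorem isTorsion'_aeval'_of_isNilpotent {R M : Type*} [CommSemiring R] [AddCommMonoid M]
    [Module R M] {f : End R M} (hf : IsNilpotent f) :
    IsTorsion' (AEval' f) (Submonoid.powers (X : R[X])) := by
  obtain ⟨m, hm⟩ := hf
  intro x
  obtain ⟨v, rfl⟩ := (AEval'.of f).surjective x
  refine ⟨⟨X ^ m, Submonoid.pow_mem _ (Submonoid.mem_powers X) m⟩, ?_⟩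
  rw [Submonoid.mk_smul, AEval'.X_pow_smul_of, hm, zero_smul, map_zero]

theorem exists_toMatrix_eq_blockDiagonal'_weightedShift_one {K V : Type*} [Field K]
    [AddCommGroup V] [Module K V] [Module.Finite K V] {f : End K V} (hf : IsNilpotent f) :
    ∃ (d : ℕ) (k : Fin d → ℕ) (b : Basis (Σ i, Fin (k i)) K V),
      LinearMap.toMatrix b b f = blockDiagonal' fun i => weightedShift 1 (k i) := by
  obtain ⟨d, k, ⟨e⟩⟩ := torsion_by_prime_power_decomposition (irreducible_X (R := K))
    (isTorsion'_aeval'_of_isNilpotent hf)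
  choose c hc using fun i => exists_basis_toMatrix_lsmul_X_eq_weightedShift K (k i)
  let φ := (AEval'.of f).trans
    ((e.trans (DirectSum.linearEquivFunOnFintype K[X] (Fin d) _)).restrictScalars K)
  have hφ (v : V) : φ (f v) = (X : K[X]) • φ v := by
    simp [φ, ← AEval'.X_smul_of]
  refine ⟨d, k, (Pi.basis c).map φ.symm, ?_⟩
  ext ⟨i, a⟩ ⟨i', j⟩
  rw [LinearMap.toMatrix_apply, Basis.map_repr, LinearEquiv.trans_apply, LinearEquiv.symm_symm,
    Basis.map_apply, hφ, LinearEquiv.apply_symm_apply, Pi.basis_repr, Pi.basis_apply,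
    ← Pi.single_smul]
  obtain rfl | hi := eq_or_ne i i'
  · rw [blockDiagonal'_apply_eq, ← hc, LinearMap.toMatrix_apply, Pi.single_eq_same,
      Algebra.lsmul_apply]
  · rw [blockDiagonal'_apply_ne _ _ _ hi, Pi.single_eq_of_ne hi, map_zero, Finsupp.zero_apply]

end JordanForm

theorem stmt15_general {K ι : Type*} [Field K] [CharZero K] [StarRing K]
    (hK : ∀ n : ℕ, ∃ z : K, z * star z = n) [Fintype ι] [DecidableEq ι] (A : Matrix ι ι K)
    (hA : IsNilpotent A) :
    ∃ g B : Matrix ι ι K, IsUnit g ∧ B = g * A * g⁻¹ ∧ B * (B * Bᴴ - Bᴴ * B) = -B := by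
  have hunit (j : ℕ) : ∃ z : Kˣ, (z : K) * star (z : K) = j + 1 := by
    obtain ⟨z, hz⟩ := hK (j + 1)
    have hz0 : z ≠ 0 := by
      rintro rfl
      rw [zero_mul] at hz
      exact Nat.cast_ne_zero.2 j.succ_ne_zero hz.symm
    exact ⟨Units.mk0 z hz0, by simpa using hz⟩
  choose w hw using hunit
  obtain ⟨d, k, b₁, hb₁⟩ :=
    exists_toMatrix_eq_blockDiagonal'_weightedShift_one (hA.map (toLinAlgEquiv' (R := K)))
  obtain ⟨b, hb⟩ := exists_toMatrix_eq_blockDiagonal'_weightedShift_units hb₁ w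
  obtain ⟨e, g, hg, hgA⟩ := exists_conj_eq_submatrix_toMatrix A b
  refine ⟨g, g * A * g⁻¹, hg, rfl, ?_⟩
  have hsol := IsSolitonMatrix.blockDiagonal' fun i => isSolitonMatrix_weightedShift hw (k i)
  rw [← hb] at hsol
  exact hgA ▸ hsol.submatrix e

theorem stmt15 {n : ℕ} (A : Matrix (Fin n) (Fin n) ℂ) (hA : IsNilpotent A) :
    ∃ g B : Matrix (Fin n) (Fin n) ℂ, IsUnit g ∧ B = g * A * g⁻¹ ∧
      B * (B * Bᴴ - Bᴴ * B) = -B :=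
  stmt15_general (fun n => ⟨((√n : ℝ) : ℂ), by simp [← Complex.ofReal_mul]⟩) A hA
end

section
/- Let M, L > 0, let 0 < T ≤ ∞, and let f : (0,T) → ℝ be a differentiable function with f(t) > 0 and f'(t) ≤ (M/t)·f(t) − L·f(t)² for all t ∈ (0,T). Then f(t) ≤ (M+1)/(L·t) for all t ∈ (0,T). -/
/-!
The function `s ^ M` is an integrating factor for `f' ≤ (M / s) f`, so `f / s ^ M` is nonincreasing;
in particular, if `f` is positive at `t`, it is positive on all of `(0, t]`. There the substitution
`1 / f` linearises the Riccati inequality: `s ^ M / f - L s ^ (M + 1) / (M + 1)` is nondecreasing.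
When `-1 < M` its lower limit at `0` is nonnegative, so its value at `t` is nonnegative, which is
the bound. When `M ≤ -1`, a positive `f` satisfies the inequality for every larger `M` as well, and
letting that exponent decrease to `-1` rules out `f t > 0`.
-/

open Set Filter Topology

section IntegratingFactor

variable {D : Set ℝ} {a p y y' : ℝ → ℝ}

theorem antitoneOn_div_of_deriv_le_mul (hD : Convex ℝ D)
    (hp : ∀ x ∈ D, HasDerivWithinAt p (a x * p x) D x) (hp_pos : ∀ x ∈ D, 0 < p x)
    (hy : ∀ x ∈ D, HasDerivWithinAt y (y' x) D x) (hle : ∀ x ∈ D, y' x ≤ a x * y x) :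
    AntitoneOn (fun x => y x / p x) D := by
  have hderiv : ∀ x ∈ D, HasDerivWithinAt (fun x => y x / p x)
      ((y' x * p x - y x * (a x * p x)) / p x ^ 2) D x :=
    fun x hx => (hy x hx).div (hp x hx) (hp_pos x hx).ne'
  refine antitoneOn_of_hasDerivWithinAt_nonpos hD (fun x hx => (hderiv x hx).continuousWithinAt)
    (fun x hx => (hderiv x (interior_subset hx)).mono interior_subset) fun x hx => ?_
  replace hx := interior_subset hx
  refine div_nonpos_of_nonpos_of_nonneg ?_ (sq_nonneg _)
  calc y' x * p x - y x * (a x * p x) = (y' x - a x * y x) * p x := by ring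
    _ ≤ 0 := mul_nonpos_of_nonpos_of_nonneg (sub_nonpos.2 (hle x hx)) (hp_pos x hx).le

theorem monotoneOn_div_sub_of_deriv_le_riccati {b q : ℝ → ℝ} (hD : Convex ℝ D)
    (hp : ∀ x ∈ D, HasDerivWithinAt p (a x * p x) D x) (hp_nonneg : ∀ x ∈ D, 0 ≤ p x)
    (hq : ∀ x ∈ D, HasDerivWithinAt q (b x * p x) D x)
    (hy : ∀ x ∈ D, HasDerivWithinAt y (y' x) D x) (hy_ne : ∀ x ∈ D, y x ≠ 0)
    (hle : ∀ x ∈ D, y' x ≤ a x * y x - b x * y x ^ 2) :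
    MonotoneOn (fun x => p x / y x - q x) D := by
  have hderiv : ∀ x ∈ D, HasDerivWithinAt (fun x => p x / y x - q x)
      ((a x * p x * y x - p x * y' x) / y x ^ 2 - b x * p x) D x :=
    fun x hx => ((hp x hx).div (hy x hx) (hy_ne x hx)).sub (hq x hx)
  refine monotoneOn_of_hasDerivWithinAt_nonneg hD (fun x hx => (hderiv x hx).continuousWithinAt)
    (fun x hx => (hderiv x (interior_subset hx)).mono interior_subset) fun x hx => ?_
  replace hx := interior_subset hx
  have hyx := hy_ne x hx
  calc 0 ≤ p x * (a x * y x - b x * y x ^ 2 - y' x) / y x ^ 2 :=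
        div_nonneg (mul_nonneg (hp_nonneg x hx) (sub_nonneg.2 (hle x hx))) (sq_nonneg _)
    _ = (a x * p x * y x - p x * y' x) / y x ^ 2 - b x * p x := by field_simp; ring

end IntegratingFactor

theorem hasDerivAt_rpow_const_div_mul {x : ℝ} (hx : x ≠ 0) (r : ℝ) :
    HasDerivAt (fun s : ℝ => s ^ r) (r / x * x ^ r) x := by
  have h := Real.hasDerivAt_rpow_const (p := r) (Or.inl hx)
  rwa [Real.rpow_sub_one hx, ← mul_div_assoc, mul_div_right_comm] at h

theorem hasDerivAt_const_mul_rpow_add_one {x r : ℝ} (hx : x ≠ 0) (hr : r + 1 ≠ 0) (c : ℝ) :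
    HasDerivAt (fun s : ℝ => c / (r + 1) * s ^ (r + 1)) (c * x ^ r) x := by
  have h := (Real.hasDerivAt_rpow_const (p := r + 1) (Or.inl hx)).const_mul (c / (r + 1))
  rwa [add_sub_cancel_right, ← mul_assoc, div_mul_cancel₀ c hr] at h

theorem tendsto_const_mul_rpow_nhdsGT_zero {r : ℝ} (hr : 0 < r) (c : ℝ) :
    Tendsto (fun s : ℝ => c * s ^ r) (𝓝[>] 0) (𝓝 0) := by
  have h := ((Real.continuousAt_rpow_const 0 r (Or.inr hr.le)).const_mul c).tendsto
  rw [Real.zero_rpow hr.ne', mul_zero] at h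
  exact h.mono_left nhdsWithin_le_nhds

section PowerCoefficient

variable {M L t : ℝ} {f f' : ℝ → ℝ}

theorem pos_on_Ioc_of_deriv_le_div_mul
    (hderiv : ∀ s ∈ Ioc 0 t, HasDerivWithinAt f (f' s) (Ioc 0 t) s)
    (hle : ∀ s ∈ Ioc 0 t, f' s ≤ M / s * f s) (hft : 0 < f t) :
    ∀ s ∈ Ioc 0 t, 0 < f s := by
  intro s hs
  have ht : 0 < t := hs.1.trans_le hs.2
  have hanti : AntitoneOn (fun s => f s / s ^ M) (Ioc 0 t) :=
    antitoneOn_div_of_deriv_le_mul (convex_Ioc 0 t)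
      (fun s hs => (hasDerivAt_rpow_const_div_mul hs.1.ne' M).hasDerivWithinAt)
      (fun s hs => Real.rpow_pos_of_pos hs.1 M) hderiv hle
  have hquot : 0 < f s / s ^ M :=
    (div_pos hft (Real.rpow_pos_of_pos ht M)).trans_le (hanti hs ⟨ht, le_rfl⟩ hs.2)
  exact (div_pos_iff_of_pos_right (Real.rpow_pos_of_pos hs.1 M)).1 hquot

theorem mul_le_add_one_of_pos_of_deriv_le_riccati (hM : -1 < M) (ht : 0 < t)
    (hderiv : ∀ s ∈ Ioc 0 t, HasDerivWithinAt f (f' s) (Ioc 0 t) s)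
    (hpos : ∀ s ∈ Ioc 0 t, 0 < f s)
    (hle : ∀ s ∈ Ioc 0 t, f' s ≤ M / s * f s - L * f s ^ 2) :
    f t * (L * t) ≤ M + 1 := by
  have hM1 : 0 < M + 1 := by linarith
  have htmem : t ∈ Ioc 0 t := ⟨ht, le_rfl⟩
  have hmono : MonotoneOn (fun s => s ^ M / f s - L / (M + 1) * s ^ (M + 1)) (Ioc 0 t) :=
    monotoneOn_div_sub_of_deriv_le_riccati (convex_Ioc 0 t)
      (fun s hs => (hasDerivAt_rpow_const_div_mul hs.1.ne' M).hasDerivWithinAt)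
      (fun s hs => Real.rpow_nonneg hs.1.le M)
      (fun s hs => (hasDerivAt_const_mul_rpow_add_one hs.1.ne' hM1.ne' L).hasDerivWithinAt)
      hderiv (fun s hs => (hpos s hs).ne') hle
  have hnonneg : 0 ≤ t ^ M / f t - L / (M + 1) * t ^ (M + 1) := by
    have hlim := (tendsto_const_mul_rpow_nhdsGT_zero hM1 (L / (M + 1))).neg
    rw [neg_zero] at hlim
    refine le_of_tendsto hlim ?_
    filter_upwards [Ioc_mem_nhdsGT ht] with s hs
    have hquot : 0 ≤ s ^ M / f s := div_nonneg (Real.rpow_nonneg hs.1.le M) (hpos s hs).le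
    linarith [hmono hs htmem hs.2]
  have hft := hpos t htmem
  have hfactor : t ^ M / f t - L / (M + 1) * t ^ (M + 1) =
      t ^ M / (f t * (M + 1)) * (M + 1 - f t * (L * t)) := by
    rw [Real.rpow_add_one ht.ne']
    field_simp
  have hcoeff : 0 < t ^ M / (f t * (M + 1)) :=
    div_pos (Real.rpow_pos_of_pos ht M) (mul_pos hft hM1)
  rw [hfactor] at hnonneg
  exact sub_nonneg.1 (nonneg_of_mul_nonneg_right hnonneg hcoeff)

theorem mul_le_max_of_deriv_le_riccati (hL : 0 ≤ L) (ht : 0 < t)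
    (hderiv : ∀ s ∈ Ioc 0 t, HasDerivWithinAt f (f' s) (Ioc 0 t) s)
    (hle : ∀ s ∈ Ioc 0 t, f' s ≤ M / s * f s - L * f s ^ 2) :
    f t * (L * t) ≤ max (M + 1) 0 := by
  rcases le_or_gt (f t) 0 with hft | hft
  · exact (mul_nonpos_of_nonpos_of_nonneg hft (by positivity)).trans (le_max_right _ _)
  have hpos : ∀ s ∈ Ioc 0 t, 0 < f s := pos_on_Ioc_of_deriv_le_div_mul hderiv
    (fun s hs => (hle s hs).trans (sub_le_self _ (by positivity))) hft
  refine le_of_forall_gt_imp_ge_of_dense fun c hc => ?_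
  obtain ⟨hMc, hc0⟩ := max_lt_iff.1 hc
  have hle_c : ∀ s ∈ Ioc 0 t, f' s ≤ (c - 1) / s * f s - L * f s ^ 2 := by
    intro s hs
    have hs0 := hs.1
    have hfs := hpos s hs
    have hcoeff : M / s * f s ≤ (c - 1) / s * f s := by
      gcongr
      linarith
    exact (hle s hs).trans (sub_le_sub_right hcoeff _)
  simpa only [sub_add_cancel] using
    mul_le_add_one_of_pos_of_deriv_le_riccati (by linarith) ht hderiv hpos hle_c

end PowerCoefficient

theorem stmt16_general {M L : ℝ} (hL : 0 < L) {T : EReal} {f f' : ℝ → ℝ}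
    (hderiv : ∀ t : ℝ, 0 < t → (t : EReal) < T → HasDerivAt f (f' t) t)
    (hineq : ∀ t : ℝ, 0 < t → (t : EReal) < T →
      f' t ≤ (M / t) * f t - L * (f t) ^ 2) :
    ∀ t : ℝ, 0 < t → (t : EReal) < T → f t ≤ max (M + 1) 0 / (L * t) := by
  intro t ht htT
  have hlt : ∀ s ∈ Ioc 0 t, (s : EReal) < T :=
    fun s hs => (EReal.coe_le_coe_iff.2 hs.2).trans_lt htT
  rw [le_div_iff₀ (mul_pos hL ht)]
  exact mul_le_max_of_deriv_le_riccati hL.le ht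
    (fun s hs => (hderiv s hs.1 (hlt s hs)).hasDerivWithinAt)
    (fun s hs => hineq s hs.1 (hlt s hs))

theorem stmt16 {M L : ℝ} (hM : 0 < M) (hL : 0 < L) {T : EReal} (hT : 0 < T)
    {f f' : ℝ → ℝ}
    (hderiv : ∀ t : ℝ, 0 < t → (t : EReal) < T → HasDerivAt f (f' t) t)
    (hpos : ∀ t : ℝ, 0 < t → (t : EReal) < T → 0 < f t)
    (hineq : ∀ t : ℝ, 0 < t → (t : EReal) < T →
      f' t ≤ (M / t) * f t - L * (f t) ^ 2) :
    ∀ t : ℝ, 0 < t → (t : EReal) < T → f t ≤ (M + 1) / (L * t) := by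
  simpa only [max_eq_left (by positivity : 0 ≤ M + 1)] using stmt16_general hL hderiv hineq
end
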